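/- arXiv:1107.2704 — 2 statements merged into one kernel-verified Lean document; each statement's English description precedes it below -/
import Mathlib

section
/- Let μ, λ, V₀, α ∈ ℝ and let φ ∈ H¹(ℝ) be a solution of −φ'' + ξ²φ + λ|φ|²φ − V₀cos²(αξ)φ = μφ. Then φ ∈ C²(ℝ) and for every δ ∈ (0,1) there exists C(δ) > 0 such that |φ(ξ)| ≤ C(δ) exp(−(1−δ)ξ²/2) for all ξ ∈ ℝ. Moreover, if λ > 0 and μ < 1 − |V₀|, the inequality holds with δ = 0. -/
/-!
Decay at infinity is a linear phenomenon: `φ'' = a φ` with the real coefficient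
`a(ξ) = ξ² + λ|φ(ξ)|² - V(ξ) - μ`. Compare with `e^{-p}`, which solves `ψ'' = (p'² - p'')ψ`. Where
`a ≥ p'² - p''`, the flux `W = ⟪φ, φ' + p'φ⟫` is nondecreasing, since
`W' = ‖φ' + p'φ‖² + (a - (p'² - p''))‖φ‖²`. It is also at most `x` times an integrable function
because `φ, φ' ∈ L²`, and `1/x` is not integrable at infinity, so `W ≤ 0`. As
`(e^{2p}‖φ‖²)' = 2e^{2p}W`, the function `e^p‖φ‖` is then nonincreasing. For `p = cξ²/2` the
condition reads `a ≥ c²ξ² - c`. Since `φ → 0` at infinity and `V ≤ B`, eventually `a ≥ ξ² - s` for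
each `s > μ + B`: this suffices for `0 < c < 1`, and for `c = 1` as soon as `μ + B < 1`.
-/

open MeasureTheory Real

/-- `φ : ℝ → ℂ` is an `H¹` solution of the stationary Gross–Pitaevskii equation
`-φ'' + ξ²φ + λ|φ|²φ - V₀cos²(αξ)φ = μφ`. -/
def IsGPSolutionC (μ lam V₀ α : ℝ) (φ : ℝ → ℂ) : Prop :=
  Differentiable ℝ φ ∧ Differentiable ℝ (deriv φ) ∧
  Integrable (fun ξ : ℝ => ‖φ ξ‖ ^ 2) ∧
  Integrable (fun ξ : ℝ => ‖deriv φ ξ‖ ^ 2) ∧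
  ∀ ξ : ℝ, -deriv (deriv φ) ξ + (ξ ^ 2 : ℝ) * φ ξ + (lam : ℂ) * (‖φ ξ‖ ^ 2 : ℝ) * φ ξ
      - (V₀ : ℂ) * (Real.cos (α * ξ) ^ 2 : ℝ) * φ ξ = (μ : ℂ) * φ ξ

open Filter Asymptotics Set
open scoped Topology RealInnerProductSpace

lemma isBigO_top_of_isBigO_cocompact {X E F : Type*} [TopologicalSpace X]
    [SeminormedAddCommGroup E] [NormedAddCommGroup F] {f : X → E} {g : X → F}
    (hf : Continuous f) (hg : Continuous g) (hg₀ : ∀ x, g x ≠ 0) (h : f =O[cocompact X] g) :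
    f =O[⊤] g := by
  obtain ⟨C, hC⟩ := h.bound
  obtain ⟨K, hK, hKC⟩ := mem_cocompact.1 hC
  have h_inside : f =O[𝓟 K] g :=
    (hf.continuousOn.isBigO_principal (c := (1 : ℝ)) hK (by simp)).trans
      (hg.continuousOn.isBigO_rev_principal hK (fun x _ => hg₀ x) 1)
  have h_outside : f =O[𝓟 Kᶜ] g := isBigO_principal.2 ⟨C, fun x hx => hKC hx⟩
  simpa using h_inside.sup h_outside

lemma nonpos_of_monotoneOn_of_isBigO_mul_integrable {W h : ℝ → ℝ} {R : ℝ}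
    (hW : MonotoneOn W (Ici R)) (hWh : W =O[atTop] fun x => x * h x)
    (hh : IntegrableAtFilter h atTop) : ∀ x ∈ Ici R, W x ≤ 0 := by
  intro x hx
  by_contra! hpos
  have h_one : (fun _ => (1 : ℝ)) =O[atTop] W := by
    refine IsBigO.of_bound (W x)⁻¹ ?_
    filter_upwards [eventually_ge_atTop x] with y hxy
    have hle : W x ≤ W y := hW hx (le_trans hx hxy) hxy
    rw [norm_one, norm_of_nonneg (hpos.le.trans hle), inv_mul_eq_div, one_le_div hpos]
    exact hle
  have h_inv : (fun y : ℝ => y⁻¹) =O[atTop] h := by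
    refine ((isBigO_refl (fun y : ℝ => y⁻¹) atTop).mul (h_one.trans hWh)).congr' ?_ ?_
    · exact .of_forall fun y => mul_one _
    · filter_upwards [eventually_ne_atTop 0] with y hy
      exact inv_mul_cancel_left₀ hy _
  obtain ⟨r, hr⟩ := integrableAtFilter_atTop_iff.1 <| h_inv.integrableAtFilter
    measurable_inv.aestronglyMeasurable.stronglyMeasurableAtFilter hh
  exact not_integrableOn_Ici_inv hr

lemma isBigO_exp_neg_of_antitoneOn {E : Type*} [SeminormedAddCommGroup E] {f : ℝ → E} {p : ℝ → ℝ}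
    {R : ℝ} (h : AntitoneOn (fun x => exp (2 * p x) * ‖f x‖ ^ 2) (Ici R)) :
    f =O[atTop] fun x => exp (-p x) := by
  refine IsBigO.of_bound (exp (p R) * ‖f R‖) ?_
  filter_upwards [eventually_ge_atTop R] with x hx
  have h_sq (y : ℝ) : exp (2 * p y) * ‖f y‖ ^ 2 = (exp (p y) * ‖f y‖) ^ 2 := by
    rw [mul_pow, ← exp_nat_mul, Nat.cast_two]
  have h_le : exp (p x) * ‖f x‖ ≤ exp (p R) * ‖f R‖ := by
    refine (sq_le_sq₀ (by positivity) (by positivity)).1 ?_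
    rw [← h_sq, ← h_sq]
    exact h self_mem_Ici hx hx
  rw [norm_of_nonneg (exp_pos _).le, exp_neg, ← div_eq_mul_inv, le_div_iff₀' (exp_pos _)]
  exact h_le

lemma eventually_mul_sq_sub_le_sq_sub {r : ℝ} (hr : r < 1) (t s : ℝ) :
    ∀ᶠ x : ℝ in cocompact ℝ, r * x ^ 2 - t ≤ x ^ 2 - s := by
  have h_sq : Tendsto (fun x : ℝ => (1 - r) * x ^ 2) (cocompact ℝ) atTop := by
    simpa using ((tendsto_pow_atTop two_ne_zero).comp
      (tendsto_norm_cocompact_atTop (E := ℝ))).const_mul_atTop (sub_pos.2 hr)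
  filter_upwards [h_sq.eventually_ge_atTop (s - t)] with x hx
  linarith

section InnerProductSpace

variable {E : Type*} [NormedAddCommGroup E] [InnerProductSpace ℝ E] {f f' : ℝ → E}

lemma abs_real_inner_le_norm_sq_add_norm_sq (u v : E) : |⟪u, v⟫| ≤ ‖u‖ ^ 2 + ‖v‖ ^ 2 := by
  nlinarith [abs_real_inner_le_norm u v, sq_nonneg (‖u‖ - ‖v‖), sq_nonneg ‖u‖, sq_nonneg ‖v‖]

lemma integrable_inner_of_memLp_two {X : Type*} [MeasurableSpace X] {ν : Measure X} {g h : X → E}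
    (hg : MemLp g 2 ν) (hh : MemLp h 2 ν) : Integrable (fun x => ⟪g x, h x⟫) ν :=
  (hg.norm.integrable_sq.add hh.norm.integrable_sq).mono' (hg.1.inner hh.1)
    (.of_forall fun x => abs_real_inner_le_norm_sq_add_norm_sq (g x) (h x))

lemma tendsto_zero_cocompact_of_memLp_two (hf : ∀ x, HasDerivAt f (f' x) x) (hf₂ : MemLp f 2)
    (hf'₂ : MemLp f' 2) : Tendsto f (cocompact ℝ) (𝓝 0) := by
  have h_deriv (x : ℝ) : HasDerivAt (fun y => ‖f y‖ ^ 2) (2 * ⟪f x, f' x⟫) x := (hf x).norm_sq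
  have h_int : Integrable (fun x => ‖f x‖ ^ 2) := hf₂.norm.integrable_sq
  have h_int' : Integrable (fun x => 2 * ⟪f x, f' x⟫) :=
    (integrable_inner_of_memLp_two hf₂ hf'₂).const_mul 2
  have h_sq : Tendsto (fun x => ‖f x‖ ^ 2) (cocompact ℝ) (𝓝 0) := by
    rw [cocompact_eq_atBot_atTop]
    exact (tendsto_zero_of_hasDerivAt_of_integrableOn_Iic (a := 0) (fun x _ => h_deriv x)
      h_int'.integrableOn h_int.integrableOn).sup
      (tendsto_zero_of_hasDerivAt_of_integrableOn_Ioi (a := 0) (fun x _ => h_deriv x)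
      h_int'.integrableOn h_int.integrableOn)
  rw [tendsto_zero_iff_norm_tendsto_zero]
  simpa using h_sq.sqrt

/-- The flux `⟪f, f' + p' f⟫` of `f` relative to the weight `e^p`, that is
`e^{-2p} (e^{2p} ‖f‖²)' / 2`. The derivatives of `f` and `p` are passed as functions. -/
def weightedFlux (p' : ℝ → ℝ) (f f' : ℝ → E) (x : ℝ) : ℝ :=
  ⟪f x, f' x + p' x • f x⟫

variable {a p p' p'' : ℝ → ℝ}

lemma hasDerivAt_exp_mul_norm_sq {x : ℝ} (hf : HasDerivAt f (f' x) x)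
    (hp : HasDerivAt p (p' x) x) :
    HasDerivAt (fun y => exp (2 * p y) * ‖f y‖ ^ 2)
      (2 * exp (2 * p x) * weightedFlux p' f f' x) x := by
  refine ((hp.const_mul 2).exp.mul hf.norm_sq).congr_deriv ?_
  rw [weightedFlux, inner_add_right, inner_smul_right, real_inner_self_eq_norm_sq]
  ring

lemma hasDerivAt_weightedFlux {x : ℝ} (hf : HasDerivAt f (f' x) x)
    (hf' : HasDerivAt f' (a x • f x) x) (hp' : HasDerivAt p' (p'' x) x) :
    HasDerivAt (weightedFlux p' f f')
      (‖f' x + p' x • f x‖ ^ 2 + (a x - (p' x ^ 2 - p'' x)) * ‖f x‖ ^ 2) x := by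
  refine (hf.inner ℝ (hf'.add (hp'.smul hf))).congr_deriv ?_
  simp only [norm_add_sq_real, norm_smul, Pi.add_apply, Pi.smul_apply', inner_add_right,
    inner_smul_right, mul_pow, norm_eq_abs, sq_abs, real_inner_self_eq_norm_sq,
    real_inner_comm (f x) (f' x)]
  ring

lemma monotoneOn_weightedFlux {s : Set ℝ} (hs : Convex ℝ s)
    (hf : ∀ x ∈ s, HasDerivAt f (f' x) x) (hf' : ∀ x ∈ s, HasDerivAt f' (a x • f x) x)
    (hp' : ∀ x ∈ s, HasDerivAt p' (p'' x) x) (ha : ∀ x ∈ s, p' x ^ 2 - p'' x ≤ a x) :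
    MonotoneOn (weightedFlux p' f f') s := by
  have h_deriv (x) (hx : x ∈ s) := hasDerivAt_weightedFlux (hf x hx) (hf' x hx) (hp' x hx)
  refine monotoneOn_of_hasDerivWithinAt_nonneg hs
    (fun x hx => (h_deriv x hx).continuousAt.continuousWithinAt)
    (fun x hx => (h_deriv x (interior_subset hx)).hasDerivWithinAt) fun x hx => ?_
  have := sub_nonneg.2 (ha x (interior_subset hx))
  positivity

lemma weightedFlux_isBigO_atTop (hp' : p' =O[atTop] id) :
    weightedFlux p' f f' =O[atTop] fun x => x * (‖f x‖ ^ 2 + ‖f' x‖ ^ 2) := by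
  obtain ⟨k, hk, hpk⟩ := hp'.exists_nonneg
  refine IsBigO.of_bound (1 + k) ?_
  filter_upwards [hpk.bound, eventually_ge_atTop 1] with x hpx hx
  have hx₀ : 0 ≤ x := zero_le_one.trans hx
  rw [id, norm_of_nonneg hx₀, norm_eq_abs] at hpx
  rw [norm_eq_abs, norm_of_nonneg (mul_nonneg hx₀ (by positivity))]
  calc |weightedFlux p' f f' x|
      ≤ |⟪f x, f' x⟫| + |p' x| * ‖f x‖ ^ 2 := by
        rw [weightedFlux, inner_add_right, inner_smul_right, real_inner_self_eq_norm_sq]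
        exact (abs_add_le _ _).trans_eq (by rw [abs_mul, abs_of_nonneg (sq_nonneg ‖f x‖)])
    _ ≤ 1 * (‖f x‖ ^ 2 + ‖f' x‖ ^ 2) + k * x * (‖f x‖ ^ 2 + ‖f' x‖ ^ 2) := by
        rw [one_mul]
        gcongr
        · exact abs_real_inner_le_norm_sq_add_norm_sq _ _
        · exact le_add_of_nonneg_right (sq_nonneg _)
    _ ≤ x * (‖f x‖ ^ 2 + ‖f' x‖ ^ 2) + k * x * (‖f x‖ ^ 2 + ‖f' x‖ ^ 2) := by gcongr
    _ = (1 + k) * (x * (‖f x‖ ^ 2 + ‖f' x‖ ^ 2)) := by ring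

lemma isBigO_exp_neg_atTop_of_eventually_le (hf : ∀ᶠ x in atTop, HasDerivAt f (f' x) x)
    (hf' : ∀ᶠ x in atTop, HasDerivAt f' (a x • f x) x)
    (hf_int : IntegrableAtFilter (fun x => ‖f x‖ ^ 2 + ‖f' x‖ ^ 2) atTop)
    (hp : ∀ᶠ x in atTop, HasDerivAt p (p' x) x) (hp' : ∀ᶠ x in atTop, HasDerivAt p' (p'' x) x)
    (hp'_bigO : p' =O[atTop] id) (ha : ∀ᶠ x in atTop, p' x ^ 2 - p'' x ≤ a x) :
    f =O[atTop] fun x => exp (-p x) := by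
  obtain ⟨R, hR⟩ := eventually_atTop.1 (hf.and (hf'.and (hp.and (hp'.and ha))))
  choose hf hf' hp hp' ha using hR
  have h_flux : ∀ x ∈ Ici R, weightedFlux p' f f' x ≤ 0 :=
    nonpos_of_monotoneOn_of_isBigO_mul_integrable
      (monotoneOn_weightedFlux (convex_Ici R) hf hf' hp' ha)
      (weightedFlux_isBigO_atTop hp'_bigO) hf_int
  have h_deriv (x) (hx : R ≤ x) := hasDerivAt_exp_mul_norm_sq (hf x hx) (hp x hx)
  refine isBigO_exp_neg_of_antitoneOn <| antitoneOn_of_hasDerivWithinAt_nonpos (convex_Ici R)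
    (fun x hx => (h_deriv x hx).continuousAt.continuousWithinAt)
    (fun x hx => (h_deriv x (interior_subset hx)).hasDerivWithinAt) fun x hx => ?_
  exact mul_nonpos_of_nonneg_of_nonpos (by positivity) (h_flux x (interior_subset hx))

variable {c : ℝ}

lemma isBigO_gaussian_atTop_of_eventually_le (hf : ∀ᶠ x in atTop, HasDerivAt f (f' x) x)
    (hf' : ∀ᶠ x in atTop, HasDerivAt f' (a x • f x) x)
    (hf_int : IntegrableAtFilter (fun x => ‖f x‖ ^ 2 + ‖f' x‖ ^ 2) atTop)
    (ha : ∀ᶠ x in atTop, c ^ 2 * x ^ 2 - c ≤ a x) :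
    f =O[atTop] fun x => exp (-c * x ^ 2 / 2) := by
  have hp (x : ℝ) : HasDerivAt (fun y => c * y ^ 2 / 2) (c * x) x :=
    (((hasDerivAt_pow 2 x).const_mul c).div_const 2).congr_deriv (by push_cast; ring)
  have hp' (x : ℝ) : HasDerivAt (fun y => c * y) c x := by
    simpa using (hasDerivAt_id x).const_mul c
  refine (isBigO_exp_neg_atTop_of_eventually_le hf hf' hf_int (.of_forall hp) (.of_forall hp')
    (isBigO_const_mul_self c id atTop) (by simpa only [mul_pow] using ha)).congr_right fun x => ?_
  ring_nf

lemma isBigO_gaussian_cocompact_of_eventually_le (hf : ∀ x, HasDerivAt f (f' x) x)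
    (hf' : ∀ x, HasDerivAt f' (a x • f x) x)
    (hf_int : Integrable (fun x => ‖f x‖ ^ 2 + ‖f' x‖ ^ 2))
    (ha : ∀ᶠ x in cocompact ℝ, c ^ 2 * x ^ 2 - c ≤ a x) :
    f =O[cocompact ℝ] fun x => exp (-c * x ^ 2 / 2) := by
  have h_top : f =O[atTop] fun x => exp (-c * x ^ 2 / 2) :=
    isBigO_gaussian_atTop_of_eventually_le (.of_forall hf) (.of_forall hf')
      (hf_int.integrableAtFilter _) (ha.filter_mono atTop_le_cocompact)
  have h_reflected : (fun x => f (-x)) =O[atTop] fun x => exp (-c * x ^ 2 / 2) := by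
    refine isBigO_gaussian_atTop_of_eventually_le (f' := fun x => -f' (-x)) (a := fun x => a (-x))
      (.of_forall fun x => ?_) (.of_forall fun x => ?_) ?_ ?_
    · simpa [Function.comp_def] using (hf (-x)).scomp x (hasDerivAt_neg x)
    · simpa [Function.comp_def] using ((hf' (-x)).scomp x (hasDerivAt_neg x)).fun_neg
    · simpa using hf_int.comp_neg.integrableAtFilter atTop
    · simpa using tendsto_neg_atTop_atBot.eventually (ha.filter_mono atBot_le_cocompact)
  have h_bot : f =O[atBot] fun x => exp (-c * x ^ 2 / 2) := by
    simpa [Function.comp_def] using h_reflected.comp_tendsto tendsto_neg_atBot_atTop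
  rw [cocompact_eq_atBot_atTop]
  exact h_bot.sup h_top

/-- The coefficient `a` in the form `φ'' = a φ` of the stationary Gross–Pitaevskii equation with
harmonic trap, external potential `-V` and chemical potential `μ`. -/
def gpCoefficient (μ lam : ℝ) (V : ℝ → ℝ) (φ : ℝ → E) (x : ℝ) : ℝ :=
  x ^ 2 + lam * ‖φ x‖ ^ 2 - V x - μ

/-- `φ` is an `H¹` solution of `-φ'' + x²φ + λ‖φ‖²φ - Vφ = μφ`, the stationary Gross–Pitaevskii
equation with an arbitrary potential `V` in place of the optical lattice `V₀cos²(αx)` and values in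
a real inner product space. -/
structure IsGPSolution (μ lam : ℝ) (V : ℝ → ℝ) (φ : ℝ → E) : Prop where
  differentiable : Differentiable ℝ φ
  differentiable_deriv : Differentiable ℝ (deriv φ)
  memLp : MemLp φ 2
  memLp_deriv : MemLp (deriv φ) 2
  deriv_deriv : ∀ x, deriv (deriv φ) x = gpCoefficient μ lam V φ x • φ x

namespace IsGPSolution

variable {μ lam B : ℝ} {V : ℝ → ℝ} {φ : ℝ → E}

lemma contDiff (h : IsGPSolution μ lam V φ) (hV : Continuous V) : ContDiff ℝ 2 φ := by
  have hφ : Continuous φ := h.differentiable.continuous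
  have h_deriv₂ : Continuous (deriv (deriv φ)) := by
    simp only [funext h.deriv_deriv, gpCoefficient]
    fun_prop
  have h_deriv : ContDiff ℝ 1 (deriv φ) :=
    contDiff_one_iff_deriv.2 ⟨h.differentiable_deriv, h_deriv₂⟩
  exact (contDiff_succ_iff_deriv (n := 1)).2 ⟨h.differentiable, by simp, h_deriv⟩

lemma tendsto_zero (h : IsGPSolution μ lam V φ) : Tendsto φ (cocompact ℝ) (𝓝 0) :=
  tendsto_zero_cocompact_of_memLp_two (fun x => (h.differentiable x).hasDerivAt) h.memLp
    h.memLp_deriv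

lemma eventually_sq_sub_le_gpCoefficient (h : IsGPSolution μ lam V φ) (hVB : ∀ x, V x ≤ B) {s : ℝ}
    (hs : μ + B < s) : ∀ᶠ x in cocompact ℝ, x ^ 2 - s ≤ gpCoefficient μ lam V φ x := by
  have h_cubic : Tendsto (fun x => lam * ‖φ x‖ ^ 2) (cocompact ℝ) (𝓝 0) := by
    simpa using (h.tendsto_zero.norm.pow 2).const_mul lam
  filter_upwards [h_cubic.eventually_const_le (show μ + B - s < 0 by linarith)] with x hx
  rw [gpCoefficient]
  linarith [hVB x]

lemma exists_norm_le_gaussian (h : IsGPSolution μ lam V φ) {c : ℝ}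
    (hc : ∀ᶠ x in cocompact ℝ, c ^ 2 * x ^ 2 - c ≤ gpCoefficient μ lam V φ x) :
    ∃ C : ℝ, 0 < C ∧ ∀ x, ‖φ x‖ ≤ C * exp (-c * x ^ 2 / 2) := by
  have h_cocompact : φ =O[cocompact ℝ] fun x => exp (-c * x ^ 2 / 2) :=
    isBigO_gaussian_cocompact_of_eventually_le (fun x => (h.differentiable x).hasDerivAt)
      (fun x => h.deriv_deriv x ▸ (h.differentiable_deriv x).hasDerivAt)
      (h.memLp.norm.integrable_sq.add h.memLp_deriv.norm.integrable_sq) hc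
  have h_top := isBigO_top_of_isBigO_cocompact h.differentiable.continuous (by fun_prop)
    (fun x => (exp_pos _).ne') h_cocompact
  obtain ⟨C, hC, hφC⟩ := h_top.exists_pos
  exact ⟨C, hC, by simpa using isBigOWith_top.1 hφC⟩

end IsGPSolution

theorem gaussian_decay_of_solutions_general {μ lam B : ℝ} {V : ℝ → ℝ} {φ : ℝ → E}
    (hV : Continuous V) (hVB : ∀ x, V x ≤ B) (h : IsGPSolution μ lam V φ) :
    ContDiff ℝ 2 φ ∧
    (∀ δ : ℝ, δ ∈ Ioo (0 : ℝ) 1 → ∃ C : ℝ, 0 < C ∧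
      ∀ x : ℝ, ‖φ x‖ ≤ C * exp (-(1 - δ) * x ^ 2 / 2)) ∧
    (μ < 1 - B → ∃ C : ℝ, 0 < C ∧ ∀ x : ℝ, ‖φ x‖ ≤ C * exp (-x ^ 2 / 2)) := by
  refine ⟨h.contDiff hV, fun δ hδ => h.exists_norm_le_gaussian ?_, fun hμ => ?_⟩
  · have h_rate : (1 - δ) ^ 2 < 1 :=
      pow_lt_one₀ (sub_nonneg.2 hδ.2.le) (sub_lt_self 1 hδ.1) two_ne_zero
    filter_upwards [h.eventually_sq_sub_le_gpCoefficient hVB (lt_add_one (μ + B)),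
      eventually_mul_sq_sub_le_sq_sub h_rate (1 - δ) (μ + B + 1)] with x hx hx'
    exact hx'.trans hx
  · have h_coeff := h.eventually_sq_sub_le_gpCoefficient hVB (lt_sub_iff_add_lt.1 hμ)
    simpa using h.exists_norm_le_gaussian (c := 1) (by simpa using h_coeff)

end InnerProductSpace

lemma mul_cos_sq_le_abs (v θ : ℝ) : v * cos θ ^ 2 ≤ |v| :=
  calc v * cos θ ^ 2 ≤ |v| * 1 :=
        mul_le_mul (le_abs_self v) (cos_sq_le_one θ) (sq_nonneg _) (abs_nonneg v)
    _ = |v| := mul_one _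

lemma IsGPSolutionC.isGPSolution {μ lam V₀ α : ℝ} {φ : ℝ → ℂ} (h : IsGPSolutionC μ lam V₀ α φ) :
    IsGPSolution μ lam (fun x => V₀ * cos (α * x) ^ 2) φ where
  differentiable := h.1
  differentiable_deriv := h.2.1
  memLp := (memLp_two_iff_integrable_sq_norm h.1.continuous.aestronglyMeasurable).2 h.2.2.1
  memLp_deriv :=
    (memLp_two_iff_integrable_sq_norm h.2.1.continuous.aestronglyMeasurable).2 h.2.2.2.1
  deriv_deriv x := by
    have h_eq := h.2.2.2.2 x
    rw [gpCoefficient, Complex.real_smul]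
    push_cast at h_eq ⊢
    linear_combination -h_eq

theorem gaussian_decay_of_solutions (μ lam V₀ α : ℝ) (φ : ℝ → ℂ)
    (hφ : IsGPSolutionC μ lam V₀ α φ) :
    ContDiff ℝ 2 φ ∧
    (∀ δ : ℝ, δ ∈ Set.Ioo (0 : ℝ) 1 → ∃ C : ℝ, 0 < C ∧
      ∀ ξ : ℝ, ‖φ ξ‖ ≤ C * Real.exp (-(1 - δ) * ξ ^ 2 / 2)) ∧
    (0 < lam → μ < 1 - |V₀| → ∃ C : ℝ, 0 < C ∧
      ∀ ξ : ℝ, ‖φ ξ‖ ≤ C * Real.exp (-ξ ^ 2 / 2)) :=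
  (gaussian_decay_of_solutions_general (by fun_prop) (fun _ => mul_cos_sq_le_abs V₀ _)
    hφ.isGPSolution).imp_right (.imp_right fun h_sharp _ => h_sharp)
end

section
/- For any λ, V₀, α ∈ ℝ, there exists ψ_min ∈ Σ₁ minimizing the energy E over Σ₁: E(ψ_min) = inf{E(ψ) : ψ ∈ Σ₁}, where E(ψ) = ∫|ψ'|² + ∫ξ²|ψ|² + (λ/2)∫|ψ|⁴ − V₀∫cos²(αξ)|ψ|². -/
open MeasureTheory Real

/-- Membership in the energy space `X`. -/
def InX (ψ : ℝ → ℂ) : Prop :=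
  Differentiable ℝ ψ ∧
  Integrable (fun ξ : ℝ => ‖ψ ξ‖ ^ 2) ∧
  Integrable (fun ξ : ℝ => ‖deriv ψ ξ‖ ^ 2) ∧
  Integrable (fun ξ : ℝ => ξ ^ 2 * ‖ψ ξ‖ ^ 2) ∧
  Integrable (fun ξ : ℝ => ‖ψ ξ‖ ^ 4)

/-- Membership in the unit-charge constraint manifold `Σ₁`. -/
def InSigma1 (ψ : ℝ → ℂ) : Prop := InX ψ ∧ (∫ ξ : ℝ, ‖ψ ξ‖ ^ 2) = 1

/-- The Gross–Pitaevskii energy functional. -/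
noncomputable def energy (lam V₀ α : ℝ) (ψ : ℝ → ℂ) : ℝ :=
  (∫ ξ : ℝ, ‖deriv ψ ξ‖ ^ 2) + (∫ ξ : ℝ, ξ ^ 2 * ‖ψ ξ‖ ^ 2)
    + lam / 2 * (∫ ξ : ℝ, ‖ψ ξ‖ ^ 4)
    - V₀ * (∫ ξ : ℝ, Real.cos (α * ξ) ^ 2 * ‖ψ ξ‖ ^ 2)

/-!
The direct method is run on pairs `(u, g)` where `g` is a weak `L²` derivative of `u`; there no
differentiability has to survive the passage to the limit. The Gagliardo–Nirenberg bound
`‖u‖²_∞ ≤ (2/δ) ‖u‖²₂ + 2δ ‖g‖²₂` makes the energy coercive on the unit sphere. Along a minimizing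
sequence the derivatives converge weakly in `L²` and one point value converges, so the functions
converge pointwise; a potential tending to infinity prevents mass from escaping, so mass and
quartic term converge, while kinetic and potential energy are lower semicontinuous.

The minimizer so obtained is only weakly differentiable. Multiplying the energy inequality by powers
of the mass gives an inequality homogeneous of degree four that holds on the whole energy space with
equality at the minimizer, hence the Euler–Lagrange equation without a constrained variation. By
the du Bois-Reymond lemma the weak derivative then has a continuously differentiable
representative, and the minimizer is of class `C²`.
-/

open Filter Topology Set
open scoped ENNReal InnerProductSpace

section Convergence

variable {α : Type*} [MeasurableSpace α] {ν : Measure α} {F : ℕ → α → ℝ} {f : α → ℝ}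

theorem integrable_and_integral_le_of_tendsto_ae {A : ℕ → ℝ} {a : ℝ}
    (hF : ∀ n, Integrable (F n) ν) (hF_nonneg : ∀ n x, 0 ≤ F n x)
    (hlim : ∀ᵐ x ∂ν, Tendsto (fun n => F n x) atTop (𝓝 (f x)))
    (hFA : ∀ n, ∫ x, F n x ∂ν ≤ A n) (hA : Tendsto A atTop (𝓝 a)) :
    Integrable f ν ∧ ∫ x, f x ∂ν ≤ a := by
  have hf_meas : AEStronglyMeasurable f ν :=
    aestronglyMeasurable_of_tendsto_ae _ (fun n => (hF n).1) hlim
  have hf_nonneg : 0 ≤ᵐ[ν] f := by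
    filter_upwards [hlim] with x hx using ge_of_tendsto' hx fun n => hF_nonneg n x
  have fatou : ∫⁻ x, ‖f x‖ₑ ∂ν ≤ ENNReal.ofReal a := calc
    ∫⁻ x, ‖f x‖ₑ ∂ν = ∫⁻ x, liminf (fun n => ‖F n x‖ₑ) atTop ∂ν :=
      lintegral_congr_ae (hlim.mono fun x hx => hx.enorm.liminf_eq.symm)
    _ ≤ liminf (fun n => ∫⁻ x, ‖F n x‖ₑ ∂ν) atTop :=
      lintegral_liminf_le' fun n => (hF n).1.enorm
    _ ≤ liminf (fun n => ENNReal.ofReal (A n)) atTop := by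
      refine liminf_le_liminf (.of_forall fun n => ?_)
      rw [← ofReal_integral_norm_eq_lintegral_enorm (hF n)]
      simpa only [norm_of_nonneg (hF_nonneg n _)] using ENNReal.ofReal_le_ofReal (hFA n)
    _ = ENNReal.ofReal a := (ENNReal.tendsto_ofReal hA).liminf_eq
  have hf : Integrable f ν := ⟨hf_meas, fatou.trans_lt ENNReal.ofReal_lt_top⟩
  have ha : 0 ≤ a := ge_of_tendsto' hA fun n => (integral_nonneg (hF_nonneg n)).trans (hFA n)
  refine ⟨hf, ?_⟩
  rwa [← ENNReal.ofReal_le_ofReal_iff ha, ofReal_integral_eq_lintegral_ofReal hf hf_nonneg,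
    ← lintegral_congr_ae (hf_nonneg.mono fun x hx => Real.enorm_of_nonneg hx)]

theorem setIntegral_lt_norm_le_div {f w : α → ℝ} {C R : ℝ} (hw_meas : Measurable w)
    (hR : 0 < R) (hw_nonneg : ∀ x, 0 ≤ w x) (hf : Integrable f ν)
    (hwf : Integrable (fun x => w x * ‖f x‖) ν) (hC : ∫ x, w x * ‖f x‖ ∂ν ≤ C) :
    ∫ x in {x | R < w x}, ‖f x‖ ∂ν ≤ C / R := by
  rw [le_div_iff₀' hR, ← integral_const_mul]
  refine le_trans (setIntegral_mono_on (hf.norm.const_mul R).integrableOn hwf.integrableOn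
    (measurableSet_lt measurable_const hw_meas) fun x hx => ?_)
    ((setIntegral_le_integral hwf (.of_forall fun x => ?_)).trans hC)
  · exact mul_le_mul_of_nonneg_right (le_of_lt hx) (norm_nonneg _)
  · exact mul_nonneg (hw_nonneg x) (norm_nonneg _)

theorem unifTight_of_integral_weight_mul_le {w : α → ℝ} {C : ℝ} (hw_meas : Measurable w)
    (hw_nonneg : ∀ x, 0 ≤ w x) (hw : ∀ R, ν {x | w x ≤ R} < ∞) (hF : ∀ n, Integrable (F n) ν)
    (hwF : ∀ n, Integrable (fun x => w x * ‖F n x‖) ν) (hC : ∀ n, ∫ x, w x * ‖F n x‖ ∂ν ≤ C) :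
    UnifTight F 1 ν := by
  intro ε hε
  obtain ⟨R, hR, hCR⟩ : ∃ R : ℝ, 0 < R ∧ C / R ≤ ε :=
    ⟨(|C| + 1) / ε, by positivity, by
      rw [div_div_eq_mul_div, div_le_iff₀ (by positivity), mul_comm]
      exact mul_le_mul_of_nonneg_left (by linarith [le_abs_self C]) ε.2⟩
  refine ⟨{x | w x ≤ R}, (hw R).ne, fun n => ?_⟩
  have hset : {x | w x ≤ R}ᶜ = {x | R < w x} := by ext; simp
  have hmeas : MeasurableSet {x | R < w x} := measurableSet_lt measurable_const hw_meas
  rw [hset, eLpNorm_indicator_eq_eLpNorm_restrict hmeas, eLpNorm_one_eq_lintegral_enorm,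
    ← ofReal_integral_norm_eq_lintegral_enorm (hF n).integrableOn]
  exact ENNReal.ofReal_le_of_le_toReal <|
    (setIntegral_lt_norm_le_div hw_meas hR hw_nonneg (hF n) (hwF n) (hC n)).trans hCR

theorem unifIntegrable_one_of_forall_norm_le {K : ℝ} (hF : ∀ n, AEStronglyMeasurable (F n) ν)
    (hFK : ∀ n x, ‖F n x‖ ≤ K) : UnifIntegrable F 1 ν := by
  refine unifIntegrable_of le_rfl ENNReal.one_ne_top hF fun ε _ => ⟨(K + 1).toNNReal, fun n => ?_⟩
  have hempty : {x | (K + 1).toNNReal ≤ ‖F n x‖₊} = ∅ := by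
    ext x
    simpa [Real.toNNReal_le_iff_le_coe] using (hFK n x).trans_lt (lt_add_one K)
  simp [hempty]

theorem integrable_of_norm_le_of_integrable_weight_mul {w : α → ℝ} {K : ℝ}
    (hw_meas : Measurable w) (hw_nonneg : ∀ x, 0 ≤ w x) (hw : ν {x | w x ≤ 1} < ∞)
    (hf : AEStronglyMeasurable f ν) (hfK : ∀ᵐ x ∂ν, ‖f x‖ ≤ K)
    (hwf : Integrable (fun x => w x * ‖f x‖) ν) : Integrable f ν := by
  have hK : Integrable ({x | w x ≤ 1}.indicator fun _ => K) ν :=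
    (integrable_indicator_iff (measurableSet_le hw_meas measurable_const)).2
      (integrableOn_const hw.ne)
  refine (hK.add hwf).mono' hf ?_
  filter_upwards [hfK] with x hx
  by_cases hx1 : w x ≤ 1
  · simpa [hx1] using hx.trans (le_add_of_nonneg_right (mul_nonneg (hw_nonneg x) (abs_nonneg _)))
  · simpa [hx1] using le_mul_of_one_le_left (abs_nonneg (f x)) (not_le.1 hx1).le

theorem tendsto_integral_of_bounded_of_integral_weight_mul_le {w : α → ℝ} {C K : ℝ}
    (hw_meas : Measurable w) (hw_nonneg : ∀ x, 0 ≤ w x) (hw : ∀ R, ν {x | w x ≤ R} < ∞)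
    (hF : ∀ n, Integrable (F n) ν) (hFK : ∀ n x, ‖F n x‖ ≤ K)
    (hwF : ∀ n, Integrable (fun x => w x * ‖F n x‖) ν)
    (hC : ∀ n, ∫ x, w x * ‖F n x‖ ∂ν ≤ C)
    (hlim : ∀ᵐ x ∂ν, Tendsto (fun n => F n x) atTop (𝓝 (f x))) :
    Tendsto (fun n => ∫ x, F n x ∂ν) atTop (𝓝 (∫ x, f x ∂ν)) := by
  have hF_meas (n : ℕ) : AEStronglyMeasurable (F n) ν := (hF n).1
  have hwf : Integrable (fun x => w x * ‖f x‖) ν := (integrable_and_integral_le_of_tendsto_ae hwF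
    (fun n x => mul_nonneg (hw_nonneg x) (norm_nonneg _))
    (hlim.mono fun x hx => hx.norm.const_mul (w x)) hC tendsto_const_nhds).1
  have hf : Integrable f ν := integrable_of_norm_le_of_integrable_weight_mul hw_meas hw_nonneg
    (hw 1) (aestronglyMeasurable_of_tendsto_ae _ hF_meas hlim)
    (hlim.mono fun x hx => le_of_tendsto' hx.norm fun n => hFK n x) hwf
  refine tendsto_integral_of_L1' f hf.1 (.of_forall hF) ?_
  exact tendsto_Lp_of_tendsto_ae le_rfl ENNReal.one_ne_top hF_meas
    (memLp_one_iff_integrable.2 hf) (unifIntegrable_one_of_forall_norm_le hF_meas hFK)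
    (unifTight_of_integral_weight_mul_le hw_meas hw_nonneg hw hF hwF hC) hlim

theorem tendsto_integral_norm_pow_of_integral_weight_mul_le {E : Type*}
    [NormedAddCommGroup E] {w : α → ℝ} {u : ℕ → α → E} {ψ : α → E} {C K : ℝ}
    (hw_meas : Measurable w) (hw_nonneg : ∀ x, 0 ≤ w x) (hw : ∀ R, ν {x | w x ≤ R} < ∞)
    (hu : ∀ n, MemLp (u n) 2 ν) (hK : 0 ≤ K) (huK : ∀ n x, ‖u n x‖ ≤ K)
    (hwu : ∀ n, Integrable (fun x => w x * ‖u n x‖ ^ 2) ν)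
    (hC : ∀ n, ∫ x, w x * ‖u n x‖ ^ 2 ∂ν ≤ C)
    (hlim : ∀ᵐ x ∂ν, Tendsto (fun n => u n x) atTop (𝓝 (ψ x))) (k : ℕ) :
    Tendsto (fun n => ∫ x, ‖u n x‖ ^ (k + 2) ∂ν) atTop (𝓝 (∫ x, ‖ψ x‖ ^ (k + 2) ∂ν)) := by
  have hdom (n : ℕ) (x : α) : ‖u n x‖ ^ (k + 2) ≤ K ^ k * ‖u n x‖ ^ 2 := by
    rw [pow_add]
    gcongr
    exact huK n x
  have hF (n : ℕ) : Integrable (fun x => ‖u n x‖ ^ (k + 2)) ν :=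
    (((hu n).integrable_norm_pow two_ne_zero).const_mul _).mono' ((hu n).1.norm.pow _)
      (.of_forall fun x => by simpa using hdom n x)
  have hwdom (n : ℕ) (x : α) : w x * ‖‖u n x‖ ^ (k + 2)‖ ≤ K ^ k * (w x * ‖u n x‖ ^ 2) := by
    rw [norm_of_nonneg (by positivity), mul_left_comm]
    exact mul_le_mul_of_nonneg_left (hdom n x) (hw_nonneg x)
  have hwF (n : ℕ) : Integrable (fun x => w x * ‖‖u n x‖ ^ (k + 2)‖) ν :=
    ((hwu n).const_mul _).mono' (hw_meas.aestronglyMeasurable.mul (hF n).1.norm) <|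
      .of_forall fun x => by
        rw [norm_of_nonneg (mul_nonneg (hw_nonneg x) (norm_nonneg _))]
        exact hwdom n x
  refine tendsto_integral_of_bounded_of_integral_weight_mul_le (K := K ^ (k + 2)) (C := K ^ k * C)
    hw_meas hw_nonneg hw hF (fun n x => ?_) hwF (fun n => ?_)
    (hlim.mono fun x hx => hx.norm.pow _)
  · simpa using pow_le_pow_left₀ (norm_nonneg _) (huK n x) (k + 2)
  · refine (integral_mono (hwF n) ((hwu n).const_mul _) (hwdom n)).trans ?_
    rw [integral_const_mul]
    exact mul_le_mul_of_nonneg_left (hC n) (pow_nonneg hK k)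

theorem measure_le_lt_top_of_tendsto_cocompact {X : Type*} [TopologicalSpace X]
    [MeasurableSpace X] {ρ : Measure X} [IsFiniteMeasureOnCompacts ρ] {w : X → ℝ}
    (hw : Tendsto w (cocompact X) atTop) (R : ℝ) : ρ {x | w x ≤ R} < ∞ := by
  obtain ⟨K, hK, hKR⟩ := mem_cocompact.1 (hw.eventually_gt_atTop R)
  refine (measure_mono fun x (hx : w x ≤ R) => ?_).trans_lt hK.measure_lt_top
  by_contra hxK
  exact (hKR hxK).not_ge hx

end Convergence

section WeakCompactness

theorem exists_subseq_tendsto_inner {H : Type*} [NormedAddCommGroup H] [InnerProductSpace ℝ H]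
    [CompleteSpace H] [TopologicalSpace.SeparableSpace H] {v : ℕ → H} {r : ℝ}
    (hv : ∀ n, ‖v n‖ ≤ r) :
    ∃ (v₀ : H) (φ : ℕ → ℕ), StrictMono φ ∧
      ∀ y, Tendsto (fun n => ⟪v (φ n), y⟫_ℝ) atTop (𝓝 ⟪v₀, y⟫_ℝ) := by
  have hball (n : ℕ) : (InnerProductSpace.toDual ℝ H (v n)).toWeakDual ∈
      WeakDual.toStrongDual ⁻¹' Metric.closedBall (0 : StrongDual ℝ H) r := by
    simpa [mem_preimage] using hv n
  obtain ⟨ℓ, -, φ, hφ, hlim⟩ := WeakDual.isSeqCompact_closedBall ℝ H 0 r hball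
  refine ⟨(InnerProductSpace.toDual ℝ H).symm (WeakDual.toStrongDual ℓ), φ, hφ, fun y => ?_⟩
  rw [InnerProductSpace.toDual_symm_apply]
  exact ((WeakDual.eval_continuous y).tendsto ℓ).comp hlim

theorem tendsto_of_forall_tendsto_inner {ι E : Type*} [NormedAddCommGroup E]
    [InnerProductSpace ℝ E] [FiniteDimensional ℝ E] {l : Filter ι} {v : ι → E} {v₀ : E}
    (h : ∀ y, Tendsto (fun i => ⟪y, v i⟫_ℝ) l (𝓝 ⟪y, v₀⟫_ℝ)) : Tendsto v l (𝓝 v₀) := by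
  let b := stdOrthonormalBasis ℝ E
  simpa only [b.sum_repr'] using
    tendsto_finsetSum Finset.univ fun i _ => (h (b i)).smul_const (b i)

variable {α : Type*} [MeasurableSpace α] {ν : Measure α}
  {E : Type*} [NormedAddCommGroup E] [InnerProductSpace ℝ E]

theorem integral_inner_toLp {f g : α → E} (hf : MemLp f 2 ν) (hg : MemLp g 2 ν) :
    ⟪hf.toLp f, hg.toLp g⟫_ℝ = ∫ x, ⟪f x, g x⟫_ℝ ∂ν := by
  rw [L2.inner_def]
  refine integral_congr_ae ?_
  filter_upwards [hf.coeFn_toLp, hg.coeFn_toLp] with x hfx hgx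
  rw [hfx, hgx]

theorem norm_toLp_sq {f : α → E} (hf : MemLp f 2 ν) :
    ‖hf.toLp f‖ ^ 2 = ∫ x, ‖f x‖ ^ 2 ∂ν := by
  simp only [← real_inner_self_eq_norm_sq, integral_inner_toLp]

theorem integrable_inner_of_memLp_two_s7 {f g : α → E} (hf : MemLp f 2 ν) (hg : MemLp g 2 ν) :
    Integrable (fun x => ⟪f x, g x⟫_ℝ) ν := by
  refine (L2.integrable_inner (𝕜 := ℝ) (hf.toLp f) (hg.toLp g)).congr ?_
  filter_upwards [hf.coeFn_toLp, hg.coeFn_toLp] with x hfx hgx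
  rw [hfx, hgx]

theorem exists_subseq_tendsto_integral_inner [CompleteSpace E] [SecondCountableTopology E]
    [IsSeparable ν] {g : ℕ → α → E} {C : ℝ} (hg : ∀ n, MemLp (g n) 2 ν)
    (hC : ∀ n, ∫ x, ‖g n x‖ ^ 2 ∂ν ≤ C) :
    ∃ (g₀ : α → E) (φ : ℕ → ℕ), MemLp g₀ 2 ν ∧ StrictMono φ ∧ ∀ h, MemLp h 2 ν →
      Tendsto (fun n => ∫ x, ⟪g (φ n) x, h x⟫_ℝ ∂ν) atTop (𝓝 (∫ x, ⟪g₀ x, h x⟫_ℝ ∂ν)) := by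
  have : Fact ((2 : ℝ≥0∞) ≠ ∞) := ⟨ENNReal.ofNat_ne_top⟩
  obtain ⟨v₀, φ, hφ, hlim⟩ := exists_subseq_tendsto_inner (v := fun n => (hg n).toLp (g n))
    (r := √C) fun n => Real.le_sqrt_of_sq_le ((norm_toLp_sq (hg n)).trans_le (hC n))
  refine ⟨v₀, φ, Lp.memLp v₀, hφ, fun h hh => ?_⟩
  simpa only [integral_inner_toLp, ← integral_inner_toLp (Lp.memLp v₀) hh, Lp.toLp_coeFn]
    using hlim (hh.toLp h)

theorem integral_inner_indicator {s : Set α} (hs : MeasurableSet s) (f γ : α → E) :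
    ∫ x, ⟪f x, s.indicator γ x⟫_ℝ ∂ν = ∫ x in s, ⟪f x, γ x⟫_ℝ ∂ν := by
  rw [← integral_indicator hs]
  refine integral_congr_ae (.of_forall fun x => ?_)
  by_cases hx : x ∈ s <;> simp [hx]

theorem tendsto_setIntegral_of_tendsto_integral_inner [FiniteDimensional ℝ E] {g : ℕ → α → E}
    {γ : α → E} {s : Set α} (hs : MeasurableSet s) (hs_fin : ν s ≠ ∞)
    (hg : ∀ n, MemLp (g n) 2 ν) (hγ : MemLp γ 2 ν)
    (hweak : ∀ h : α → E, MemLp h 2 ν →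
      Tendsto (fun n => ∫ x, ⟪g n x, h x⟫_ℝ ∂ν) atTop (𝓝 (∫ x, ⟪γ x, h x⟫_ℝ ∂ν))) :
    Tendsto (fun n => ∫ x in s, g n x ∂ν) atTop (𝓝 (∫ x in s, γ x ∂ν)) := by
  have hinner (f : α → E) (hf : MemLp f 2 ν) (y : E) :
      ∫ x, ⟪f x, s.indicator (fun _ => y) x⟫_ℝ ∂ν = ⟪y, ∫ x in s, f x ∂ν⟫_ℝ := by
    have : IsFiniteMeasure (ν.restrict s) := ⟨by simpa using hs_fin.lt_top⟩
    rw [integral_inner_indicator hs, ← integral_inner ((hf.restrict s).integrable one_le_two)]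
    simp only [real_inner_comm y]
  refine tendsto_of_forall_tendsto_inner fun y => ?_
  simpa only [hinner _ (hg _), hinner _ hγ] using
    hweak _ (memLp_indicator_const 2 hs y (.inr hs_fin))

theorem two_mul_integral_inner_le {f g : α → E} (hf : MemLp f 2 ν) (hg : MemLp g 2 ν) :
    2 * ∫ x, ⟪f x, g x⟫_ℝ ∂ν ≤ ∫ x, ‖f x‖ ^ 2 ∂ν + ∫ x, ‖g x‖ ^ 2 ∂ν := by
  rw [← integral_inner_toLp hf hg, ← norm_toLp_sq hf, ← norm_toLp_sq hg]
  linarith [sq_nonneg ‖hf.toLp f - hg.toLp g‖, norm_sub_sq_real (hf.toLp f) (hg.toLp g)]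

theorem norm_setIntegral_sq_le [CompleteSpace E] {g : α → E} {s : Set α} (hs : MeasurableSet s)
    (hνs : ν s ≠ ∞) (hg : MemLp g 2 ν) :
    ‖∫ x in s, g x ∂ν‖ ^ 2 ≤ ν.real s * ∫ x, ‖g x‖ ^ 2 ∂ν := by
  set v := ∫ x in s, g x ∂ν
  have hinner : ⟪indicatorConstLp 2 hs hνs v, hg.toLp g⟫_ℝ = ‖v‖ ^ 2 := by
    rw [L2.inner_indicatorConstLp_eq_inner_setIntegral, ← real_inner_self_eq_norm_sq]
    congr 1
    exact integral_congr_ae (ae_restrict_of_ae hg.coeFn_toLp)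
  have hnorm : ‖indicatorConstLp (μ := ν) 2 hs hνs v‖ ^ 2 = ‖v‖ ^ 2 * ν.real s := by
    rw [norm_indicatorConstLp two_ne_zero ENNReal.ofNat_ne_top, mul_pow, ENNReal.toReal_ofNat,
      ← Real.sqrt_eq_rpow, Real.sq_sqrt measureReal_nonneg]
  have cauchy_schwarz : ‖v‖ ^ 2 * ‖v‖ ^ 2 ≤ ‖v‖ ^ 2 * (ν.real s * ∫ x, ‖g x‖ ^ 2 ∂ν) := by
    rw [← mul_assoc, ← hnorm, ← norm_toLp_sq hg, ← sq, ← hinner, ← mul_pow]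
    exact pow_le_pow_left₀ (hinner ▸ sq_nonneg _) (real_inner_le_norm _ _) 2
  rcases eq_or_ne v 0 with hv | hv
  · rw [hv, norm_zero, zero_pow two_ne_zero]
    exact mul_nonneg measureReal_nonneg (integral_nonneg fun x => sq_nonneg _)
  · exact le_of_mul_le_mul_left cauchy_schwarz (by positivity)

end WeakCompactness

theorem hasDerivAt_norm_add_smul_sq_pow {E : Type*} [NormedAddCommGroup E] [InnerProductSpace ℝ E]
    (x y : E) (n : ℕ) (t : ℝ) :
    HasDerivAt (fun s : ℝ => (‖x + s • y‖ ^ 2) ^ (n + 1))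
      ((n + 1) * (‖x + t • y‖ ^ 2) ^ n * (2 * ⟪x + t • y, y⟫_ℝ)) t := by
  have h : HasDerivAt (fun s : ℝ => x + s • y) y t := by
    simpa using ((hasDerivAt_id t).smul_const y).const_add x
  exact (h.norm_sq.pow (n + 1)).congr_deriv (by simp)

theorem hasDerivAt_integral_weight_mul_norm_add_smul_sq_pow {α E : Type*} [MeasurableSpace α]
    {ν : Measure α} [NormedAddCommGroup E] [InnerProductSpace ℝ E] {w : α → ℝ} {f h : α → E}
    (n : ℕ) (hw : AEStronglyMeasurable w ν) (hf : AEStronglyMeasurable f ν)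
    (hh : AEStronglyMeasurable h ν) (hwf : Integrable (fun x => w x * (‖f x‖ ^ 2) ^ (n + 1)) ν)
    (hwh : Integrable (fun x => |w x| * ((‖f x‖ + ‖h x‖) ^ (2 * n + 1) * ‖h x‖)) ν) :
    HasDerivAt (fun t : ℝ => ∫ x, w x * (‖f x + t • h x‖ ^ 2) ^ (n + 1) ∂ν)
      (∫ x, w x * ((n + 1) * (‖f x‖ ^ 2) ^ n * (2 * ⟪f x, h x⟫_ℝ)) ∂ν) 0 := by
  have hderiv (x : α) (t : ℝ) : HasDerivAt (fun t : ℝ => w x * (‖f x + t • h x‖ ^ 2) ^ (n + 1))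
      (w x * ((n + 1) * (‖f x + t • h x‖ ^ 2) ^ n * (2 * ⟪f x + t • h x, h x⟫_ℝ))) t :=
    (hasDerivAt_norm_add_smul_sq_pow (f x) (h x) n t).const_mul (w x)
  have hbound (x : α) (t : ℝ) (ht : t ∈ Metric.ball (0 : ℝ) 1) :
      ‖w x * ((n + 1) * (‖f x + t • h x‖ ^ 2) ^ n * (2 * ⟪f x + t • h x, h x⟫_ℝ))‖
        ≤ 2 * (n + 1) * (|w x| * ((‖f x‖ + ‖h x‖) ^ (2 * n + 1) * ‖h x‖)) := by
    have hnorm : ‖f x + t • h x‖ ≤ ‖f x‖ + ‖h x‖ := by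
      refine (norm_add_le _ _).trans (add_le_add_right ?_ _)
      rw [norm_smul]
      exact mul_le_of_le_one_left (norm_nonneg _) (by simpa using (mem_ball_zero_iff.1 ht).le)
    calc ‖w x * ((n + 1) * (‖f x + t • h x‖ ^ 2) ^ n * (2 * ⟪f x + t • h x, h x⟫_ℝ))‖
      _ = |w x| * ((n + 1) * (‖f x + t • h x‖ ^ 2) ^ n * (2 * |⟪f x + t • h x, h x⟫_ℝ|)) := by
        have : |(n : ℝ) + 1| = n + 1 := abs_of_nonneg (by positivity)
        simp [norm_mul, this]
      _ ≤ |w x| * ((n + 1) * ((‖f x‖ + ‖h x‖) ^ 2) ^ n * (2 * ((‖f x‖ + ‖h x‖) * ‖h x‖))) := by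
        gcongr
        exact (abs_real_inner_le_norm _ _).trans (by gcongr)
      _ = 2 * (n + 1) * (|w x| * ((‖f x‖ + ‖h x‖) ^ (2 * n + 1) * ‖h x‖)) := by
        rw [← pow_mul]; ring
  have hderiv_meas : AEStronglyMeasurable
      (fun x => w x * ((n + 1) * (‖f x + (0 : ℝ) • h x‖ ^ 2) ^ n
        * (2 * ⟪f x + (0 : ℝ) • h x, h x⟫_ℝ))) ν := by fun_prop
  simpa only [zero_smul, add_zero] using (hasDerivAt_integral_of_dominated_loc_of_deriv_le
    (Metric.ball_mem_nhds (0 : ℝ) one_pos) (.of_forall fun t => by fun_prop) (by simpa using hwf)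
    hderiv_meas (.of_forall hbound) (hwh.const_mul _) (.of_forall fun x t _ => hderiv x t)).2

theorem intervalIntegral_inner_primitive {E : Type*} [NormedAddCommGroup E]
    [InnerProductSpace ℝ E] [CompleteSpace E] {f g : ℝ → E} {a b : ℝ} (hab : a ≤ b)
    (hf : IntegrableOn f (Ioc a b)) (hg : IntegrableOn g (Ioc a b)) :
    ∫ x in a..b, ⟪f x, ∫ t in a..x, g t⟫_ℝ = ∫ t in a..b, ⟪∫ x in t..b, f x, g t⟫_ℝ := by
  let k : ℝ × ℝ → ℝ := {p : ℝ × ℝ | p.2 < p.1}.indicator fun p => ⟪f p.1, g p.2⟫_ℝ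
  have hk : Integrable k ((volume.restrict (Ioc a b)).prod (volume.restrict (Ioc a b))) := by
    refine Integrable.indicator ?_ (measurableSet_lt measurable_snd measurable_fst)
    exact (hf.norm.mul_prod hg.norm).mono' (hf.1.comp_fst.inner hg.1.comp_snd)
      (.of_forall fun p => norm_inner_le_norm _ _)
  have hleft : ∀ x ∈ Ioc a b, ⟪f x, ∫ t in a..x, g t⟫_ℝ = ∫ t in Ioc a b, k (x, t) := by
    intro x hx
    have hset : Ioc a b ∩ Iio x = Ioo a x := by
      ext t; simp only [mem_inter_iff, mem_Ioc, mem_Iio, mem_Ioo]; grind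
    rw [intervalIntegral.integral_of_le hx.1.le, integral_Ioc_eq_integral_Ioo,
      ← integral_inner (hg.mono_set (hset ▸ inter_subset_left)), ← hset,
      ← setIntegral_indicator measurableSet_Iio]
    rfl
  have hright : ∀ t ∈ Ioc a b, ⟪∫ x in t..b, f x, g t⟫_ℝ = ∫ x in Ioc a b, k (x, t) := by
    intro t ht
    have hset : Ioc a b ∩ Ioi t = Ioc t b := by
      ext x; simp only [mem_inter_iff, mem_Ioc, mem_Ioi]; grind
    rw [intervalIntegral.integral_of_le ht.2, real_inner_comm,
      ← integral_inner (hf.mono_set (hset ▸ inter_subset_left)), ← hset,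
      ← setIntegral_indicator measurableSet_Ioi]
    refine integral_congr_ae (.of_forall fun x => ?_)
    simp [k, indicator, real_inner_comm (f x)]
  rw [intervalIntegral.integral_of_le hab, intervalIntegral.integral_of_le hab,
    setIntegral_congr_fun measurableSet_Ioc hleft, setIntegral_congr_fun measurableSet_Ioc hright]
  exact integral_integral_swap hk

section WeakDerivative

theorem intervalIntegrable_inner {E : Type*} [NormedAddCommGroup E] [InnerProductSpace ℝ E]
    {f v : ℝ → E} {a b : ℝ} (hf : IntervalIntegrable f volume a b) (hv : Continuous v) :
    IntervalIntegrable (fun x => ⟪v x, f x⟫_ℝ) volume a b :=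
  (hf.norm.continuousOn_mul hv.norm.continuousOn).mono_fun'
    (hv.aestronglyMeasurable.inner hf.aestronglyMeasurable_restrict_uIoc)
    (.of_forall fun _ => norm_inner_le_norm _ _)

variable {E : Type*} [NormedAddCommGroup E]

/-- `g` is a weak derivative of the continuous representative `u`, encoded by the fundamental
theorem of calculus: `g` is locally integrable and `u` is a primitive of `g`. In dimension one
this is equivalent to the distributional definition. -/
structure HasWeakDeriv [NormedSpace ℝ E] (u g : ℝ → E) : Prop where
  locallyIntegrable : LocallyIntegrable g
  integral_eq_sub : ∀ a b, ∫ t in a..b, g t = u b - u a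

namespace HasWeakDeriv

section NormedSpace

variable [NormedSpace ℝ E] {u v g k : ℝ → E}

theorem intervalIntegrable (hu : HasWeakDeriv u g) (a b : ℝ) : IntervalIntegrable g volume a b :=
  (hu.locallyIntegrable.integrableOn_isCompact isCompact_uIcc).intervalIntegrable

theorem primitive (hg : LocallyIntegrable g) (c : E) (a : ℝ) :
    HasWeakDeriv (fun x => c + ∫ t in a..x, g t) g where
  locallyIntegrable := hg
  integral_eq_sub x y := by
    have hint (a b : ℝ) : IntervalIntegrable g volume a b :=
      (hg.integrableOn_isCompact isCompact_uIcc).intervalIntegrable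
    rw [add_sub_add_left_eq_sub, intervalIntegral.integral_interval_sub_left (hint _ _) (hint _ _)]

theorem eq_add_integral (hu : HasWeakDeriv u g) (a x : ℝ) : u x = u a + ∫ t in a..x, g t := by
  rw [hu.integral_eq_sub, add_sub_cancel]

theorem of_hasDerivAt [CompleteSpace E] (hu : ∀ x, HasDerivAt u (g x) x)
    (hg : LocallyIntegrable g) : HasWeakDeriv u g where
  locallyIntegrable := hg
  integral_eq_sub _ _ := intervalIntegral.integral_eq_sub_of_hasDerivAt (fun x _ => hu x)
    (hg.integrableOn_isCompact isCompact_uIcc).intervalIntegrable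

theorem congr_ae (hu : HasWeakDeriv u g) (hgk : g =ᵐ[volume] k) : HasWeakDeriv u k where
  locallyIntegrable := hu.locallyIntegrable.congr hgk
  integral_eq_sub a b := by
    rw [← hu.integral_eq_sub]
    exact intervalIntegral.integral_congr_ae (hgk.mono fun x hx _ => hx.symm)

theorem hasDerivAt [CompleteSpace E] (hu : HasWeakDeriv u g) (hg : Continuous g) (x : ℝ) :
    HasDerivAt u (g x) x := by
  rw [funext (hu.eq_add_integral x)]
  exact (hg.integral_hasStrictDerivAt x x).hasDerivAt.const_add _

theorem continuous (hu : HasWeakDeriv u g) : Continuous u := by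
  rw [funext (hu.eq_add_integral 0)]
  exact continuous_const.add (intervalIntegral.continuous_primitive hu.intervalIntegrable 0)

theorem add (hu : HasWeakDeriv u g) (hv : HasWeakDeriv v k) : HasWeakDeriv (u + v) (g + k) where
  locallyIntegrable := hu.locallyIntegrable.add hv.locallyIntegrable
  integral_eq_sub a b := by
    simp only [Pi.add_apply, intervalIntegral.integral_add (hu.intervalIntegrable a b)
      (hv.intervalIntegrable a b), hu.integral_eq_sub, hv.integral_eq_sub]
    abel

theorem const_smul (hu : HasWeakDeriv u g) (r : ℝ) : HasWeakDeriv (r • u) (r • g) where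
  locallyIntegrable := hu.locallyIntegrable.smul r
  integral_eq_sub a b := by
    simp only [Pi.smul_apply, intervalIntegral.integral_smul, hu.integral_eq_sub, smul_sub]

end NormedSpace

variable [InnerProductSpace ℝ E] [CompleteSpace E] {u v g k : ℝ → E}

theorem norm_sub_sq_le (hu : HasWeakDeriv u g) (hg : MemLp g 2) {a b : ℝ} (hab : a ≤ b) :
    ‖u b - u a‖ ^ 2 ≤ (b - a) * ∫ x, ‖g x‖ ^ 2 := by
  rw [← hu.integral_eq_sub, intervalIntegral.integral_of_le hab, ← Real.volume_real_Ioc_of_le hab]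
  exact norm_setIntegral_sq_le measurableSet_Ioc measure_Ioc_lt_top.ne hg

theorem norm_sq_le (hu : HasWeakDeriv u g) (hu2 : MemLp u 2) (hg : MemLp g 2) {δ : ℝ}
    (hδ : 0 < δ) (x : ℝ) :
    ‖u x‖ ^ 2 ≤ 2 / δ * (∫ y, ‖u y‖ ^ 2) + 2 * δ * ∫ y, ‖g y‖ ^ 2 := by
  have hu_int := hu2.integrable_norm_pow two_ne_zero
  set K := ∫ y, ‖g y‖ ^ 2
  have hK : 0 ≤ K := integral_nonneg fun y => sq_nonneg _
  have pointwise : ∀ y ∈ Ioc x (x + δ), ‖u x‖ ^ 2 ≤ 2 * ‖u y‖ ^ 2 + 2 * δ * K := by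
    intro y hy
    have hyx : ‖u y - u x‖ ^ 2 ≤ δ * K := (hu.norm_sub_sq_le hg hy.1.le).trans
      (mul_le_mul_of_nonneg_right (by linarith [hy.2]) hK)
    have htri : ‖u x‖ ^ 2 ≤ (‖u y‖ + ‖u y - u x‖) ^ 2 :=
      pow_le_pow_left₀ (norm_nonneg _) (norm_le_norm_add_norm_sub _ _) 2
    linarith [htri.trans add_sq_le]
  have hconst (c : ℝ) : IntegrableOn (fun _ => c) (Ioc x (x + δ)) :=
    integrableOn_const measure_Ioc_lt_top.ne
  have average : δ * ‖u x‖ ^ 2 ≤ 2 * (∫ y, ‖u y‖ ^ 2) + δ * (2 * δ * K) := calc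
    δ * ‖u x‖ ^ 2 = ∫ _ in Ioc x (x + δ), ‖u x‖ ^ 2 := by simp [hδ.le]
    _ ≤ ∫ y in Ioc x (x + δ), (2 * ‖u y‖ ^ 2 + 2 * δ * K) :=
      setIntegral_mono_on (hconst _) ((hu_int.const_mul 2).integrableOn.add (hconst _))
        measurableSet_Ioc pointwise
    _ = 2 * (∫ y in Ioc x (x + δ), ‖u y‖ ^ 2) + δ * (2 * δ * K) := by
      rw [integral_add (hu_int.const_mul 2).integrableOn (hconst _), integral_const_mul]
      simp [hδ.le]
    _ ≤ 2 * (∫ y, ‖u y‖ ^ 2) + δ * (2 * δ * K) := by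
      gcongr ?_ * ?_ + _
      exact setIntegral_le_integral hu_int (.of_forall fun y => sq_nonneg _)
  refine le_of_mul_le_mul_left (average.trans_eq ?_) hδ
  field_simp

theorem integral_inner_eq_sub (hu : HasWeakDeriv u g) (hv : HasWeakDeriv v k) {a b : ℝ}
    (hab : a ≤ b) :
    ∫ x in a..b, ⟪g x, v x⟫_ℝ = ⟪u b, v b⟫_ℝ - ⟪u a, v a⟫_ℝ - ∫ x in a..b, ⟪u x, k x⟫_ℝ := by
  have hg := hu.intervalIntegrable a b
  have hk := hv.intervalIntegrable a b
  have swap := intervalIntegral_inner_primitive hab hg.1 hk.1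
  simp only [hv.integral_eq_sub, hu.integral_eq_sub, inner_sub_left,
    real_inner_comm _ (g _)] at swap
  have hgc := (innerSL ℝ (v a)).intervalIntegral_comp_comm hg
  have hkc := (innerSL ℝ (u b)).intervalIntegral_comp_comm hk
  simp only [innerSL_apply_apply, hu.integral_eq_sub, hv.integral_eq_sub, inner_sub_right]
    at hgc hkc
  rw [intervalIntegral.integral_sub (intervalIntegrable_inner hg hv.continuous)
      (intervalIntegrable_inner hg continuous_const), hgc,
    intervalIntegral.integral_sub (intervalIntegrable_inner hk continuous_const)
      (intervalIntegrable_inner hk hu.continuous), hkc] at swap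
  simp only [real_inner_comm (v _)] at swap ⊢
  linarith

theorem integral_inner_eq_neg (hu : HasWeakDeriv u g) (hv : HasWeakDeriv v k) {a b : ℝ}
    (hab : a ≤ b) (hv_zero : ∀ x ∉ Ioo a b, v x = 0) (hk_zero : ∀ x ∉ Ioc a b, k x = 0) :
    ∫ x, ⟪g x, v x⟫_ℝ = -∫ x, ⟪u x, k x⟫_ℝ := by
  have hbyparts := hu.integral_inner_eq_sub hv hab
  rw [hv_zero a (by simp), hv_zero b (by simp), inner_zero_right, inner_zero_right, sub_zero,
    zero_sub, intervalIntegral.integral_of_le hab, intervalIntegral.integral_of_le hab] at hbyparts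
  rwa [setIntegral_eq_integral_of_forall_compl_eq_zero fun x hx => by
      rw [hv_zero x fun h => hx (Ioo_subset_Ioc_self h), inner_zero_right],
    setIntegral_eq_integral_of_forall_compl_eq_zero fun x hx => by
      rw [hk_zero x hx, inner_zero_right]] at hbyparts

end HasWeakDeriv

end WeakDerivative

section Ioc

variable {E : Type*} [NormedAddCommGroup E]

theorem memLp_restrict_Ioc_of_continuous {f : ℝ → E} (hf : Continuous f) (p : ℝ≥0∞) (a b : ℝ) :
    MemLp f p (volume.restrict (Ioc a b)) := by
  obtain ⟨C, hC⟩ := isCompact_Icc.exists_bound_of_continuousOn (s := Icc a b) hf.continuousOn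
  exact .of_bound hf.aestronglyMeasurable C
    (ae_restrict_of_forall_mem measurableSet_Ioc fun x hx => hC x (Ioc_subset_Icc_self hx))

theorem intervalIntegral_indicator_Ioc_eq_zero [NormedSpace ℝ E] {γ : ℝ → E} {a b x : ℝ}
    (hγ : ∫ t in Ioc a b, γ t = 0) (hx : x ∉ Ioo a b) :
    ∫ t in a..x, (Ioc a b).indicator γ t = 0 := by
  rcases le_or_gt x a with hxa | hax
  · refine (intervalIntegral.integral_congr fun t ht => ?_).trans intervalIntegral.integral_zero
    rw [uIcc_of_ge hxa] at ht
    exact indicator_of_notMem (fun h => h.1.not_ge ht.2) γ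
  · have hbx : b ≤ x := not_lt.1 fun hxb => hx ⟨hax, hxb⟩
    rw [intervalIntegral.integral_of_le hax.le, setIntegral_indicator measurableSet_Ioc,
      inter_eq_right.2 (Ioc_subset_Ioc_right hbx), hγ]

end Ioc

section DuBoisReymond

variable {E : Type*} [NormedAddCommGroup E] [InnerProductSpace ℝ E] [CompleteSpace E]

theorem ae_eq_average_of_integral_inner_eq_zero {α : Type*} [MeasurableSpace α] {ν : Measure α}
    [IsFiniteMeasure ν] {f : α → E} (hf : MemLp f 2 ν)
    (horth : ∀ γ, MemLp γ 2 ν → ∫ x, γ x ∂ν = 0 → ∫ x, ⟪f x, γ x⟫_ℝ ∂ν = 0) :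
    f =ᵐ[ν] fun _ => ⨍ x, f x ∂ν := by
  set c := ⨍ x, f x ∂ν
  have hfc : MemLp (fun x => f x - c) 2 ν := hf.sub (memLp_const c)
  have hmean : ∫ x, (f x - c) ∂ν = 0 := integral_sub_average ν f
  have hsq : ∫ x, ‖f x - c‖ ^ 2 ∂ν = 0 := calc
    ∫ x, ‖f x - c‖ ^ 2 ∂ν = ∫ x, (⟪f x, f x - c⟫_ℝ - ⟪c, f x - c⟫_ℝ) ∂ν := by
      simp only [← inner_sub_left, real_inner_self_eq_norm_sq]
    _ = 0 := by
      rw [integral_sub (integrable_inner_of_memLp_two_s7 hf hfc)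
        (integrable_inner_of_memLp_two_s7 (memLp_const c) hfc), horth _ hfc hmean,
        integral_inner (hfc.integrable one_le_two), hmean, inner_zero_right, sub_zero]
  filter_upwards [(integral_eq_zero_iff_of_nonneg (fun x => sq_nonneg _)
    (hfc.integrable_norm_pow two_ne_zero)).1 hsq] with x hx
  simpa [sub_eq_zero] using hx

theorem exists_ae_eq_const_of_integral_inner_eq_zero {f : ℝ → E}
    (hf : ∀ a b, MemLp f 2 (volume.restrict (Ioc a b)))
    (horth : ∀ a b (γ : ℝ → E), MemLp γ 2 (volume.restrict (Ioc a b)) →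
      ∫ x in Ioc a b, γ x = 0 → ∫ x in Ioc a b, ⟪f x, γ x⟫_ℝ = 0) :
    ∃ c, f =ᵐ[volume] fun _ => c := by
  refine ⟨∫ x in Ioc 0 1, f x, ?_⟩
  have hn (n : ℕ) : ∀ᵐ x, x ∈ Ioc (-n : ℝ) (n + 1) → f x = ∫ x in Ioc 0 1, f x := by
    have hconst := (ae_restrict_iff' measurableSet_Ioc).1 <|
      ae_eq_average_of_integral_inner_eq_zero (hf (-n) (n + 1)) (horth (-n) (n + 1))
    have hunit : ∫ x in Ioc 0 1, f x = ⨍ x in Ioc (-n : ℝ) (n + 1), f x := calc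
      ∫ x in Ioc 0 1, f x = ∫ _ in Ioc (0 : ℝ) 1, ⨍ x in Ioc (-n : ℝ) (n + 1), f x :=
        setIntegral_congr_ae measurableSet_Ioc <| hconst.mono fun x hx hx01 =>
          hx (Ioc_subset_Ioc (neg_nonpos.2 n.cast_nonneg) (by simp) hx01)
      _ = ⨍ x in Ioc (-n : ℝ) (n + 1), f x := by simp
    simpa only [hunit] using hconst
  filter_upwards [ae_all_iff.2 hn] with x hx
  obtain ⟨n, hxn⟩ := exists_nat_gt |x|
  exact hx n ⟨(abs_lt.1 hxn).1, by linarith [(abs_lt.1 hxn).2]⟩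

theorem exists_ae_eq_add_integral_of_weak_eq {g h : ℝ → E} (hg : MemLp g 2)
    (hh : LocallyIntegrable h)
    (hweak : ∀ φ γ : ℝ → E, HasWeakDeriv φ γ → MemLp γ 2 → HasCompactSupport φ →
      (∫ x, ⟪g x, γ x⟫_ℝ) + ∫ x, ⟪h x, φ x⟫_ℝ = 0) :
    ∃ c, g =ᵐ[volume] fun x => c + ∫ t in 0..x, h t := by
  have hH := HasWeakDeriv.primitive hh 0 0
  set H : ℝ → E := fun x => 0 + ∫ t in 0..x, h t
  have hH2 (a b : ℝ) := memLp_restrict_Ioc_of_continuous hH.continuous 2 a b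
  have horth (a b : ℝ) (γ : ℝ → E) (hγ : MemLp γ 2 (volume.restrict (Ioc a b)))
      (hmean : ∫ x in Ioc a b, γ x = 0) : ∫ x in Ioc a b, ⟪g x - H x, γ x⟫_ℝ = 0 := by
    rcases le_or_gt b a with hba | hab
    · simp [hba]
    -- The primitive of `γ` is an admissible test function: mean zero makes it vanish past `b`.
    set k := (Ioc a b).indicator γ
    have hk2 : MemLp k 2 := (memLp_indicator_iff_restrict measurableSet_Ioc).2 hγ
    have hφ := HasWeakDeriv.primitive (hk2.locallyIntegrable one_le_two) 0 a
    set φ : ℝ → E := fun x => 0 + ∫ t in a..x, k t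
    have hφ_zero : ∀ x ∉ Ioo a b, φ x = 0 := fun x hx => by
      simp only [φ, k, intervalIntegral_indicator_Ioc_eq_zero hmean hx, add_zero]
    have hφ_supp : HasCompactSupport φ := .intro isCompact_Icc fun x hx =>
      hφ_zero x fun h => hx (Ioo_subset_Icc_self h)
    have htest := hweak φ k hφ hk2 hφ_supp
    rw [hH.integral_inner_eq_neg hφ hab.le hφ_zero fun x hx => indicator_of_notMem hx γ,
      integral_inner_indicator measurableSet_Ioc,
      integral_inner_indicator measurableSet_Ioc, ← sub_eq_add_neg] at htest
    simp only [inner_sub_left]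
    rwa [integral_sub (integrable_inner_of_memLp_two_s7 (hg.restrict _) hγ)
      (integrable_inner_of_memLp_two_s7 (hH2 a b) hγ)]
  obtain ⟨c, hc⟩ := exists_ae_eq_const_of_integral_inner_eq_zero (f := fun x => g x - H x)
    (fun a b => (hg.restrict _).sub (hH2 a b)) horth
  exact ⟨c, hc.mono fun x hx => by simpa [H, sub_eq_iff_eq_add] using hx⟩

end DuBoisReymond

namespace HasWeakDeriv

variable {E : Type*} [NormedAddCommGroup E] [InnerProductSpace ℝ E] [CompleteSpace E]
  {u g : ℝ → E}

theorem norm_pow_four_le (hu : HasWeakDeriv u g) (hu2 : MemLp u 2) (hg : MemLp g 2) {δ : ℝ}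
    (hδ : 0 < δ) (x : ℝ) :
    ‖u x‖ ^ 4 ≤ (2 / δ * (∫ y, ‖u y‖ ^ 2) + 2 * δ * ∫ y, ‖g y‖ ^ 2) * ‖u x‖ ^ 2 := by
  rw [show ‖u x‖ ^ 4 = ‖u x‖ ^ 2 * ‖u x‖ ^ 2 by ring]
  exact mul_le_mul_of_nonneg_right (hu.norm_sq_le hu2 hg hδ x) (sq_nonneg _)

theorem integrable_norm_pow_four (hu : HasWeakDeriv u g) (hu2 : MemLp u 2) (hg : MemLp g 2) :
    Integrable fun x => ‖u x‖ ^ 4 :=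
  ((hu2.integrable_norm_pow two_ne_zero).const_mul _).mono' (hu2.1.norm.pow 4) <|
    .of_forall fun x => by
      simpa using hu.norm_pow_four_le hu2 hg one_pos x

theorem integral_norm_pow_four_le (hu : HasWeakDeriv u g) (hu2 : MemLp u 2) (hg : MemLp g 2)
    {δ : ℝ} (hδ : 0 < δ) :
    ∫ x, ‖u x‖ ^ 4 ≤
      (2 / δ * (∫ x, ‖u x‖ ^ 2) + 2 * δ * ∫ x, ‖g x‖ ^ 2) * ∫ x, ‖u x‖ ^ 2 := by
  rw [← integral_const_mul]
  exact integral_mono (hu.integrable_norm_pow_four hu2 hg)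
    ((hu2.integrable_norm_pow two_ne_zero).const_mul _) (hu.norm_pow_four_le hu2 hg hδ)

theorem contDiff_succ {n : ℕ} (hu : HasWeakDeriv u g) (hg : ContDiff ℝ n g) :
    ContDiff ℝ (n + 1) u := by
  have hderiv := hu.hasDerivAt hg.continuous
  refine contDiff_succ_iff_deriv.2 ⟨fun x => (hderiv x).differentiableAt, by simp, ?_⟩
  rwa [deriv_eq hderiv]

end HasWeakDeriv

/-- The energy space of the potential `U`: pairs of a function `u` and its weak derivative `g`
with finite mass, kinetic energy and potential energy. -/
structure MemEnergySpace {E : Type*} [NormedAddCommGroup E] [NormedSpace ℝ E] (U : ℝ → ℝ)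
    (u g : ℝ → E) : Prop where
  hasWeakDeriv : HasWeakDeriv u g
  memLp : MemLp u 2
  memLp_deriv : MemLp g 2
  integrable_potential : Integrable fun x => U x * ‖u x‖ ^ 2

/-- The Gross–Pitaevskii energy, with potential `U` and coupling constant `c`, of a function `u`
whose weak derivative is `g`. -/
noncomputable def gpEnergy {E : Type*} [NormedAddCommGroup E] (U : ℝ → ℝ) (c : ℝ)
    (u g : ℝ → E) : ℝ :=
  (∫ x, ‖g x‖ ^ 2) + (∫ x, U x * ‖u x‖ ^ 2) + c / 2 * ∫ x, ‖u x‖ ^ 4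

/-- `u`, with weak derivative `g`, minimizes the Gross–Pitaevskii energy among all elements of
unit mass of the energy space. -/
structure IsGroundState {E : Type*} [NormedAddCommGroup E] [NormedSpace ℝ E] (U : ℝ → ℝ)
    (c : ℝ) (u g : ℝ → E) : Prop where
  memEnergySpace : MemEnergySpace U u g
  integral_norm_sq : ∫ x, ‖u x‖ ^ 2 = 1
  gpEnergy_le : ∀ v k : ℝ → E, MemEnergySpace U v k → ∫ x, ‖v x‖ ^ 2 = 1 →
    gpEnergy U c u g ≤ gpEnergy U c v k

section Scaling

variable {E : Type*} [NormedAddCommGroup E] [NormedSpace ℝ E]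

theorem integral_norm_smul_pow {α : Type*} [MeasurableSpace α] (ν : Measure α) (r : ℝ)
    (f : α → E) (n : ℕ) : ∫ x, ‖(r • f) x‖ ^ n ∂ν = |r| ^ n * ∫ x, ‖f x‖ ^ n ∂ν := by
  simp only [Pi.smul_apply, norm_smul, mul_pow, norm_eq_abs, integral_const_mul]

theorem integral_norm_sq_normalize {α : Type*} [MeasurableSpace α] {ν : Measure α}
    {f : α → E} (hN : 0 < ∫ x, ‖f x‖ ^ 2 ∂ν) :
    ∫ x, ‖((√(∫ y, ‖f y‖ ^ 2 ∂ν))⁻¹ • f) x‖ ^ 2 ∂ν = 1 := by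
  rw [integral_norm_smul_pow, sq_abs, inv_pow, Real.sq_sqrt hN.le, inv_mul_cancel₀ hN.ne']

theorem gpEnergy_smul (U : ℝ → ℝ) (c r : ℝ) (u g : ℝ → E) :
    gpEnergy U c (r • u) (r • g) =
      r ^ 2 * ((∫ x, ‖g x‖ ^ 2) + ∫ x, U x * ‖u x‖ ^ 2) + r ^ 4 * (c / 2 * ∫ x, ‖u x‖ ^ 4) := by
  have hpotential : ∫ x, U x * ‖(r • u) x‖ ^ 2 = r ^ 2 * ∫ x, U x * ‖u x‖ ^ 2 := by
    simp only [Pi.smul_apply, norm_smul, mul_pow, norm_eq_abs, sq_abs, mul_left_comm (U _),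
      integral_const_mul]
  rw [gpEnergy, hpotential, integral_norm_smul_pow, integral_norm_smul_pow, sq_abs,
    Even.pow_abs (by decide)]
  ring

end Scaling

namespace MemEnergySpace

section NormedSpace

variable {E : Type*} [NormedAddCommGroup E] [NormedSpace ℝ E] {U : ℝ → ℝ} {u v g k : ℝ → E}

theorem integrable_norm_sq (hu : MemEnergySpace U u g) : Integrable fun x => ‖u x‖ ^ 2 :=
  hu.memLp.integrable_norm_pow two_ne_zero

theorem integrable_norm_deriv_sq (hu : MemEnergySpace U u g) : Integrable fun x => ‖g x‖ ^ 2 :=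
  hu.memLp_deriv.integrable_norm_pow two_ne_zero

theorem add (hu : MemEnergySpace U u g) (hv : MemEnergySpace U v k)
    (hU : AEStronglyMeasurable U) : MemEnergySpace U (u + v) (g + k) where
  hasWeakDeriv := hu.hasWeakDeriv.add hv.hasWeakDeriv
  memLp := hu.memLp.add hv.memLp
  memLp_deriv := hu.memLp_deriv.add hv.memLp_deriv
  integrable_potential := by
    refine ((hu.integrable_potential.norm.add hv.integrable_potential.norm).const_mul 2).mono'
      (hU.mul ((hu.memLp.1.add hv.memLp.1).norm.pow 2)) (.of_forall fun x => ?_)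
    have hsq : ‖u x + v x‖ ^ 2 ≤ 2 * (‖u x‖ ^ 2 + ‖v x‖ ^ 2) :=
      (pow_le_pow_left₀ (norm_nonneg _) (norm_add_le _ _) 2).trans add_sq_le
    simp only [Pi.add_apply, norm_mul, norm_pow, norm_norm]
    linarith [mul_le_mul_of_nonneg_left hsq (norm_nonneg (U x))]

theorem const_smul (hu : MemEnergySpace U u g) (r : ℝ) : MemEnergySpace U (r • u) (r • g) where
  hasWeakDeriv := hu.hasWeakDeriv.const_smul r
  memLp := hu.memLp.const_smul r
  memLp_deriv := hu.memLp_deriv.const_smul r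
  integrable_potential := by
    refine (hu.integrable_potential.const_mul (r ^ 2)).congr (.of_forall fun x => ?_)
    simp only [Pi.smul_apply, norm_smul, mul_pow, norm_eq_abs, sq_abs]
    ring

theorem of_hasCompactSupport (hU : Continuous U) (hu : HasWeakDeriv u g) (hg : MemLp g 2)
    (hu_supp : HasCompactSupport u) : MemEnergySpace U u g where
  hasWeakDeriv := hu
  memLp := hu.continuous.memLp_of_hasCompactSupport hu_supp
  memLp_deriv := hg
  integrable_potential := by
    have hsq_supp : HasCompactSupport fun x => ‖u x‖ ^ 2 :=
      hu_supp.comp_left (g := fun y : E => ‖y‖ ^ 2) (by simp)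
    exact (hU.mul (hu.continuous.norm.pow 2)).integrable_of_hasCompactSupport hsq_supp.mul_left

theorem potential_add_const {b : ℝ} (hu : MemEnergySpace U u g) :
    MemEnergySpace (fun x => U x + b) u g where
  hasWeakDeriv := hu.hasWeakDeriv
  memLp := hu.memLp
  memLp_deriv := hu.memLp_deriv
  integrable_potential :=
    (hu.integrable_potential.add (hu.integrable_norm_sq.const_mul b)).congr
      (.of_forall fun x => (add_mul (U x) b _).symm)

theorem exists_integral_norm_sq_eq_one [Nontrivial E] [CompleteSpace E] (hU : Continuous U) :
    ∃ u g : ℝ → E, MemEnergySpace U u g ∧ ∫ x, ‖u x‖ ^ 2 = 1 := by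
  obtain ⟨e, he⟩ := exists_ne (0 : E)
  let b : ContDiffBump (0 : ℝ) := ⟨1, 2, one_pos, one_lt_two⟩
  have hb : ContDiff ℝ 1 b := b.contDiff
  have hb_deriv (x : ℝ) : HasDerivAt (fun x => b x • e) (deriv b x • e) x :=
    ((hb.differentiable one_ne_zero x).hasDerivAt).smul_const e
  have hb'_cont : Continuous fun x => deriv b x • e :=
    (hb.continuous_deriv le_rfl).smul continuous_const
  have hu : MemEnergySpace U (fun x => b x • e) (fun x => deriv b x • e) :=
    of_hasCompactSupport hU (.of_hasDerivAt hb_deriv hb'_cont.locallyIntegrable)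
      (hb'_cont.memLp_of_hasCompactSupport b.hasCompactSupport.deriv.smul_right)
      b.hasCompactSupport.smul_right
  have hN : 0 < ∫ x, ‖b x • e‖ ^ 2 := by
    refine (hu.hasWeakDeriv.continuous.norm.pow 2).integral_pos_of_hasCompactSupport_nonneg_nonzero
      ?_ (fun x => sq_nonneg _) (x := 0) ?_
    · exact (b.hasCompactSupport.smul_right).comp_left (g := fun y : E => ‖y‖ ^ 2) (by simp)
    · simpa [b.one_of_mem_closedBall (x := 0) (by simp [b])] using he
  exact ⟨_, _, hu.const_smul _, integral_norm_sq_normalize hN⟩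

end NormedSpace

variable {E : Type*} [NormedAddCommGroup E] [InnerProductSpace ℝ E] [CompleteSpace E]
  {U : ℝ → ℝ} {c m : ℝ} {u g : ℝ → E}

theorem mul_sq_le_homogenized_gpEnergy
    (hm : ∀ v k : ℝ → E, MemEnergySpace U v k → ∫ x, ‖v x‖ ^ 2 = 1 → m ≤ gpEnergy U c v k)
    (hu : MemEnergySpace U u g) :
    m * (∫ x, ‖u x‖ ^ 2) ^ 2 ≤
      ((∫ x, ‖g x‖ ^ 2) + ∫ x, U x * ‖u x‖ ^ 2) * (∫ x, ‖u x‖ ^ 2)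
        + c / 2 * ∫ x, ‖u x‖ ^ 4 := by
  have hN : 0 ≤ ∫ x, ‖u x‖ ^ 2 := integral_nonneg fun x => sq_nonneg _
  rcases hN.eq_or_lt with hN | hN
  · have hquartic : ∫ x, ‖u x‖ ^ 4 = 0 := by
      refine le_antisymm ?_ (integral_nonneg fun x => by positivity)
      simpa [← hN] using hu.hasWeakDeriv.integral_norm_pow_four_le hu.memLp hu.memLp_deriv one_pos
    simp [← hN, hquartic]
  · have hscaled := hm _ _ (hu.const_smul _) (integral_norm_sq_normalize hN)
    have hpow_four (r : ℝ) : r ^ 4 = (r ^ 2) ^ 2 := pow_mul r 2 2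
    rw [gpEnergy_smul, hpow_four, inv_pow, Real.sq_sqrt hN.le] at hscaled
    refine (mul_le_mul_of_nonneg_right hscaled (sq_nonneg _)).trans_eq ?_
    field_simp

theorem kinetic_add_potential_le (hU : ∀ x, 0 ≤ U x) (hu : MemEnergySpace U u g)
    (hN : ∫ x, ‖u x‖ ^ 2 = 1) :
    (∫ x, ‖g x‖ ^ 2) + ∫ x, U x * ‖u x‖ ^ 2 ≤
      2 * gpEnergy U c u g + 4 * |c| * (|c| + 1) := by
  set K := ∫ x, ‖g x‖ ^ 2
  set P := ∫ x, ‖u x‖ ^ 4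
  have hK : 0 ≤ K := integral_nonneg fun x => sq_nonneg _
  have hT : 0 ≤ ∫ x, U x * ‖u x‖ ^ 2 := integral_nonneg fun x => mul_nonneg (hU x) (sq_nonneg _)
  -- The scale in the Gagliardo–Nirenberg bound is chosen so that `|c| * P` costs at most one `K`.
  have hP : P ≤ 4 * (|c| + 1) + K / (|c| + 1) := by
    have hδ := hu.hasWeakDeriv.integral_norm_pow_four_le hu.memLp hu.memLp_deriv
      (δ := 1 / (2 * (|c| + 1))) (by positivity)
    rw [hN] at hδ
    refine hδ.trans_eq ?_
    field_simp
    ring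
  have hquartic : -(c * P) ≤ 4 * |c| * (|c| + 1) + K := calc
    -(c * P) ≤ |c| * P := by
      rw [← neg_mul]
      exact mul_le_mul_of_nonneg_right (neg_le_abs c) (integral_nonneg fun x => by positivity)
    _ ≤ |c| * (4 * (|c| + 1) + K / (|c| + 1)) := mul_le_mul_of_nonneg_left hP (abs_nonneg c)
    _ = 4 * |c| * (|c| + 1) + |c| / (|c| + 1) * K := by ring
    _ ≤ 4 * |c| * (|c| + 1) + K := by
      gcongr
      exact mul_le_of_le_one_left hK (div_le_one_of_le₀ (by linarith) (by positivity))
  rw [gpEnergy]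
  linarith

end MemEnergySpace

theorem HasWeakDeriv.norm_le_sqrt {E : Type*} [NormedAddCommGroup E] [InnerProductSpace ℝ E]
    [CompleteSpace E] {u g : ℝ → E} {A : ℝ} (hu : HasWeakDeriv u g) (hu2 : MemLp u 2)
    (hg : MemLp g 2) (hN : ∫ x, ‖u x‖ ^ 2 ≤ A) (hK : ∫ x, ‖g x‖ ^ 2 ≤ A) (x : ℝ) :
    ‖u x‖ ≤ √(4 * A) :=
  Real.le_sqrt_of_sq_le (by linarith [hu.norm_sq_le hu2 hg one_pos x])

section Compactness

variable {E : Type*} [NormedAddCommGroup E] [InnerProductSpace ℝ E] [FiniteDimensional ℝ E]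
  {u g : ℕ → ℝ → E} {γ : ℝ → E}

theorem HasWeakDeriv.exists_subseq_tendsto {A : ℝ} (hu : ∀ n, HasWeakDeriv (u n) (g n))
    (hu2 : ∀ n, MemLp (u n) 2) (hg : ∀ n, MemLp (g n) 2) (hN : ∀ n, ∫ x, ‖u n x‖ ^ 2 ≤ A)
    (hK : ∀ n, ∫ x, ‖g n x‖ ^ 2 ≤ A) :
    ∃ (ψ γ : ℝ → E) (φ : ℕ → ℕ), StrictMono φ ∧ HasWeakDeriv ψ γ ∧ MemLp γ 2 ∧
      (∀ h : ℝ → E, MemLp h 2 →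
        Tendsto (fun n => ∫ x, ⟪g (φ n) x, h x⟫_ℝ) atTop (𝓝 (∫ x, ⟪γ x, h x⟫_ℝ))) ∧
      ∀ x, Tendsto (fun n => u (φ n) x) atTop (𝓝 (ψ x)) := by
  have hbound (n : ℕ) : u n 0 ∈ Metric.closedBall 0 √(4 * A) :=
    mem_closedBall_zero_iff.2 ((hu n).norm_le_sqrt (hu2 n) (hg n) (hN n) (hK n) 0)
  obtain ⟨c₀, -, φ₁, hφ₁, hc₀⟩ := (isCompact_closedBall _ _).tendsto_subseq hbound
  obtain ⟨γ, φ₂, hγ, hφ₂, hweak⟩ :=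
    exists_subseq_tendsto_integral_inner (fun n => hg (φ₁ n)) fun n => hK (φ₁ n)
  refine ⟨_, γ, φ₁ ∘ φ₂, hφ₁.comp hφ₂, .primitive (hγ.locallyIntegrable one_le_two) c₀ 0, hγ,
    hweak, fun x => ?_⟩
  have hIoc (a b : ℝ) := tendsto_setIntegral_of_tendsto_integral_inner measurableSet_Ioc
    (measure_Ioc_lt_top (a := a) (b := b)).ne (fun n => hg _) hγ hweak
  simp only [(hu _).eq_add_integral 0 x]
  exact (hc₀.comp hφ₂.tendsto_atTop).add ((hIoc 0 x).sub (hIoc x 0))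

end Compactness

section Existence

variable {E : Type*} [NormedAddCommGroup E] [InnerProductSpace ℝ E] {U : ℝ → ℝ} {c m : ℝ}

theorem memEnergySpace_and_gpEnergy_le_of_tendsto {u g : ℕ → ℝ → E} {ψ γ : ℝ → E}
    (hU_nonneg : ∀ x, 0 ≤ U x) (hu : ∀ n, MemEnergySpace U (u n) (g n))
    (hψ : HasWeakDeriv ψ γ) (hγ : MemLp γ 2) (hψ2 : MemLp ψ 2)
    (hweak : Tendsto (fun n => ∫ x, ⟪g n x, γ x⟫_ℝ) atTop (𝓝 (∫ x, ⟪γ x, γ x⟫_ℝ)))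
    (hlim : ∀ x, Tendsto (fun n => u n x) atTop (𝓝 (ψ x)))
    (hquartic : Tendsto (fun n => ∫ x, ‖u n x‖ ^ 4) atTop (𝓝 (∫ x, ‖ψ x‖ ^ 4)))
    (henergy : Tendsto (fun n => gpEnergy U c (u n) (g n)) atTop (𝓝 m)) :
    MemEnergySpace U ψ γ ∧ gpEnergy U c ψ γ ≤ m := by
  have hbound (n : ℕ) : ∫ x, U x * ‖u n x‖ ^ 2 ≤ gpEnergy U c (u n) (g n)
      - c / 2 * (∫ x, ‖u n x‖ ^ 4) - (2 * (∫ x, ⟪g n x, γ x⟫_ℝ) - ∫ x, ‖γ x‖ ^ 2) := by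
    -- `0 ≤ ∫ ‖g n - γ‖²` replaces the kinetic energy by a quantity continuous for weak convergence.
    have := two_mul_integral_inner_le (hu n).memLp_deriv hγ
    rw [gpEnergy]
    linarith
  have hbound_lim := (henergy.sub (hquartic.const_mul (c / 2))).sub
    ((hweak.const_mul 2).sub_const (∫ x, ‖γ x‖ ^ 2))
  obtain ⟨hpotential, hle⟩ := integrable_and_integral_le_of_tendsto_ae
    (fun n => (hu n).integrable_potential)
    (fun n x => mul_nonneg (hU_nonneg x) (sq_nonneg _))
    (.of_forall fun x => ((hlim x).norm.pow 2).const_mul (U x)) hbound hbound_lim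
  refine ⟨⟨hψ, hψ2, hγ, hpotential⟩, ?_⟩
  simp only [real_inner_self_eq_norm_sq] at hle
  rw [gpEnergy]
  linarith

theorem bddBelow_gpEnergy [CompleteSpace E] (hU_nonneg : ∀ x, 0 ≤ U x) (c : ℝ) :
    BddBelow {e | ∃ u g : ℝ → E, MemEnergySpace U u g ∧ ∫ x, ‖u x‖ ^ 2 = 1 ∧
      gpEnergy U c u g = e} := by
  refine ⟨-(2 * |c| * (|c| + 1)), ?_⟩
  rintro _ ⟨u, g, hu, hN, rfl⟩
  have hK : 0 ≤ ∫ x, ‖g x‖ ^ 2 := integral_nonneg fun x => sq_nonneg _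
  have hT : 0 ≤ ∫ x, U x * ‖u x‖ ^ 2 :=
    integral_nonneg fun x => mul_nonneg (hU_nonneg x) (sq_nonneg _)
  linarith [hu.kinetic_add_potential_le (c := c) hU_nonneg hN]

theorem exists_minimizing_seq [CompleteSpace E] [Nontrivial E] (hU : Continuous U)
    (hU_nonneg : ∀ x, 0 ≤ U x) (c : ℝ) :
    ∃ (m A : ℝ) (u g : ℕ → ℝ → E),
      (∀ v k : ℝ → E, MemEnergySpace U v k → ∫ x, ‖v x‖ ^ 2 = 1 → m ≤ gpEnergy U c v k) ∧
      Tendsto (fun n => gpEnergy U c (u n) (g n)) atTop (𝓝 m) ∧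
      (∀ n, MemEnergySpace U (u n) (g n)) ∧ (∀ n, ∫ x, ‖u n x‖ ^ 2 = 1) ∧
      ∀ n, (∫ x, ‖g n x‖ ^ 2) + ∫ x, U x * ‖u n x‖ ^ 2 ≤ A := by
  obtain ⟨u₀, g₀, hu₀, hN₀⟩ := MemEnergySpace.exists_integral_norm_sq_eq_one (E := E) hU
  have hbdd := bddBelow_gpEnergy (E := E) hU_nonneg c
  obtain ⟨e, -, he, he_mem⟩ := exists_seq_tendsto_sInf (by exact ⟨_, u₀, g₀, hu₀, hN₀, rfl⟩) hbdd
  choose u g hu hN heq using he_mem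
  obtain ⟨B, hB⟩ := he.bddAbove_range
  refine ⟨_, 2 * B + 4 * |c| * (|c| + 1), u, g,
    fun v k hv hN => csInf_le hbdd ⟨v, k, hv, hN, rfl⟩, by simpa only [heq] using he, hu, hN,
    fun n => ?_⟩
  linarith [(hu n).kinetic_add_potential_le (c := c) hU_nonneg (hN n), heq n, hB (mem_range_self n)]

theorem exists_isGroundState_of_nonneg [FiniteDimensional ℝ E] [Nontrivial E]
    (hU : Continuous U) (hU_nonneg : ∀ x, 0 ≤ U x) (hU_top : Tendsto U (cocompact ℝ) atTop)
    (c : ℝ) : ∃ u g : ℝ → E, IsGroundState U c u g := by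
  obtain ⟨m, A, u, g, hm, henergy, hu, hN, hKT⟩ := exists_minimizing_seq (E := E) hU hU_nonneg c
  have hK_nonneg (n : ℕ) : 0 ≤ ∫ x, ‖g n x‖ ^ 2 := integral_nonneg fun x => sq_nonneg _
  have hT_nonneg (n : ℕ) : 0 ≤ ∫ x, U x * ‖u n x‖ ^ 2 :=
    integral_nonneg fun x => mul_nonneg (hU_nonneg x) (sq_nonneg _)
  have hN_le (n : ℕ) : ∫ x, ‖u n x‖ ^ 2 ≤ A + 1 := by
    linarith [hN n, hKT n, hK_nonneg n, hT_nonneg n]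
  have hK_le (n : ℕ) : ∫ x, ‖g n x‖ ^ 2 ≤ A + 1 := by linarith [hKT n, hT_nonneg n]
  obtain ⟨ψ, γ, φ, hφ, hψ, hγ, hweak, hlim⟩ := HasWeakDeriv.exists_subseq_tendsto
    (fun n => (hu n).hasWeakDeriv) (fun n => (hu n).memLp) (fun n => (hu n).memLp_deriv) hN_le hK_le
  have hpow := tendsto_integral_norm_pow_of_integral_weight_mul_le hU.measurable hU_nonneg
    (measure_le_lt_top_of_tendsto_cocompact hU_top) (fun n => (hu (φ n)).memLp) (Real.sqrt_nonneg _)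
    (fun n => (hu (φ n)).hasWeakDeriv.norm_le_sqrt (hu (φ n)).memLp (hu (φ n)).memLp_deriv
      (hN_le _) (hK_le _))
    (fun n => (hu (φ n)).integrable_potential)
    (fun n => (le_add_of_nonneg_left (hK_nonneg _)).trans (hKT (φ n))) (.of_forall hlim)
  have hmass : ∫ x, ‖ψ x‖ ^ 2 = 1 :=
    tendsto_nhds_unique (hpow 0) (by simp only [zero_add, hN, tendsto_const_nhds])
  have hψ2 : MemLp ψ 2 := (memLp_two_iff_integrable_sq_norm hψ.continuous.aestronglyMeasurable).2
    (.of_integral_ne_zero (by simp [hmass]))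
  obtain ⟨hψX, hle⟩ := memEnergySpace_and_gpEnergy_le_of_tendsto hU_nonneg (fun n => hu (φ n))
    hψ hγ hψ2 (hweak γ hγ) hlim (hpow 2) (henergy.comp hφ.tendsto_atTop)
  exact ⟨ψ, γ, hψX, hmass, fun v k hv hvN => hle.trans (hm v k hv hvN)⟩

end Existence

section EulerLagrange

variable {E : Type*} [NormedAddCommGroup E] [InnerProductSpace ℝ E]

theorem hasDerivAt_integral_norm_add_smul_sq {α : Type*} [MeasurableSpace α] {ν : Measure α}
    {f h : α → E} (hf : MemLp f 2 ν) (hh : MemLp h 2 ν) :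
    HasDerivAt (fun t : ℝ => ∫ x, ‖f x + t • h x‖ ^ 2 ∂ν) (2 * ∫ x, ⟪f x, h x⟫_ℝ ∂ν) 0 := by
  have hderiv := hasDerivAt_integral_weight_mul_norm_add_smul_sq_pow (w := fun _ => 1) 0
    aestronglyMeasurable_const hf.1 hh.1 (by simpa using hf.integrable_norm_pow two_ne_zero)
    (by simpa [Pi.add_def, Pi.mul_def] using (hf.norm.add hh.norm).integrable_mul hh.norm)
  simpa [integral_const_mul] using hderiv

theorem hasDerivAt_integral_weight_mul_norm_add_smul_sq_pow_of_hasCompactSupport {w : ℝ → ℝ}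
    {u φ : ℝ → E} (n : ℕ) (hw : Continuous w) (hu : Continuous u) (hφ : Continuous φ)
    (hφ_supp : HasCompactSupport φ) (hwu : Integrable fun x => w x * (‖u x‖ ^ 2) ^ (n + 1)) :
    HasDerivAt (fun t : ℝ => ∫ x, w x * (‖u x + t • φ x‖ ^ 2) ^ (n + 1))
      (∫ x, w x * ((n + 1) * (‖u x‖ ^ 2) ^ n * (2 * ⟪u x, φ x⟫_ℝ))) 0 :=
  hasDerivAt_integral_weight_mul_norm_add_smul_sq_pow n hw.aestronglyMeasurable
    hu.aestronglyMeasurable hφ.aestronglyMeasurable hwu <|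
    Continuous.integrable_of_hasCompactSupport (by fun_prop) hφ_supp.norm.mul_left.mul_left

variable {U : ℝ → ℝ} {c : ℝ} {u g φ γ : ℝ → E}

theorem MemEnergySpace.hasDerivAt_integral_potential (hU : Continuous U)
    (hu : MemEnergySpace U u g) (hφ : Continuous φ) (hφ_supp : HasCompactSupport φ) :
    HasDerivAt (fun t : ℝ => ∫ x, U x * ‖u x + t • φ x‖ ^ 2)
      (2 * ∫ x, U x * ⟪u x, φ x⟫_ℝ) 0 := by
  have hderiv := hasDerivAt_integral_weight_mul_norm_add_smul_sq_pow_of_hasCompactSupport 0 hU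
    hu.hasWeakDeriv.continuous hφ hφ_supp (by simpa using hu.integrable_potential)
  simpa [mul_left_comm (U _), integral_const_mul] using hderiv

theorem MemEnergySpace.hasDerivAt_integral_norm_pow_four [CompleteSpace E]
    (hu : MemEnergySpace U u g) (hφ : Continuous φ) (hφ_supp : HasCompactSupport φ) :
    HasDerivAt (fun t : ℝ => ∫ x, ‖u x + t • φ x‖ ^ 4)
      (4 * ∫ x, ‖u x‖ ^ 2 * ⟪u x, φ x⟫_ℝ) 0 := by
  have hquartic := hu.hasWeakDeriv.integrable_norm_pow_four hu.memLp hu.memLp_deriv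
  have hderiv := hasDerivAt_integral_weight_mul_norm_add_smul_sq_pow_of_hasCompactSupport
    (w := fun _ => 1) 1 continuous_const hu.hasWeakDeriv.continuous hφ hφ_supp
    (by simpa [← pow_mul] using hquartic)
  convert hderiv using 1
  · simp [← pow_mul]
  · rw [← integral_const_mul]
    congr with x
    push_cast
    ring

theorem IsGroundState.firstVariation_eq [CompleteSpace E] (hU : Continuous U)
    (h : IsGroundState U c u g) (hφ : HasWeakDeriv φ γ)
    (hγ : MemLp γ 2) (hφ_supp : HasCompactSupport φ) :
    (∫ x, ⟪g x, γ x⟫_ℝ) + (∫ x, U x * ⟪u x, φ x⟫_ℝ) + c * (∫ x, ‖u x‖ ^ 2 * ⟪u x, φ x⟫_ℝ) =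
      (gpEnergy U c u g + c / 2 * ∫ x, ‖u x‖ ^ 4) * ∫ x, ⟪u x, φ x⟫_ℝ := by
  have hu := h.memEnergySpace
  have hφX : MemEnergySpace U φ γ := .of_hasCompactSupport hU hφ hγ hφ_supp
  let F (t : ℝ) : ℝ := ((∫ x, ‖g x + t • γ x‖ ^ 2) + ∫ x, U x * ‖u x + t • φ x‖ ^ 2)
    * (∫ x, ‖u x + t • φ x‖ ^ 2) + c / 2 * (∫ x, ‖u x + t • φ x‖ ^ 4)
    - gpEnergy U c u g * (∫ x, ‖u x + t • φ x‖ ^ 2) ^ 2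
  have hF_nonneg (t : ℝ) : 0 ≤ F t := sub_nonneg.2 <|
    MemEnergySpace.mul_sq_le_homogenized_gpEnergy h.gpEnergy_le
      (hu.add (hφX.const_smul t) hU.aestronglyMeasurable)
  have hF_zero : F 0 = 0 := by
    simp [F, h.integral_norm_sq, gpEnergy]
  have hmin : IsLocalMin F 0 := .of_forall fun t => hF_zero.trans_le (hF_nonneg t)
  have hmass := hasDerivAt_integral_norm_add_smul_sq hu.memLp hφX.memLp
  have hderiv : HasDerivAt F _ 0 := ((((hasDerivAt_integral_norm_add_smul_sq hu.memLp_deriv hγ).add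
    (hu.hasDerivAt_integral_potential hU hφ.continuous hφ_supp)).mul hmass).add
    ((hu.hasDerivAt_integral_norm_pow_four hφ.continuous hφ_supp).const_mul (c / 2))).sub
    ((hmass.pow 2).const_mul _)
  have hzero := hmin.hasDerivAt_eq_zero hderiv
  simp only [zero_smul, add_zero, h.integral_norm_sq, mul_one, Pi.add_apply, Nat.cast_ofNat,
    Nat.add_one_sub_one, one_pow] at hzero
  rw [gpEnergy] at hzero ⊢
  linarith

theorem IsGroundState.exists_eulerLagrange [CompleteSpace E] (hU : Continuous U)
    (h : IsGroundState U c u g) :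
    ∃ μ : ℝ, ∀ φ γ : ℝ → E, HasWeakDeriv φ γ → MemLp γ 2 → HasCompactSupport φ →
      (∫ x, ⟪g x, γ x⟫_ℝ) + ∫ x, ⟪(U x + c * ‖u x‖ ^ 2 - μ) • u x, φ x⟫_ℝ = 0 := by
  refine ⟨gpEnergy U c u g + c / 2 * ∫ x, ‖u x‖ ^ 4, fun φ γ hφ hγ hφ_supp => ?_⟩
  have hu_cont := h.memEnergySpace.hasWeakDeriv.continuous
  have hφ_cont := hφ.continuous
  have hint {w : ℝ → ℝ} (hw : Continuous w) : Integrable fun x => w x * ⟪u x, φ x⟫_ℝ := by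
    refine (hw.mul (hu_cont.inner hφ_cont)).integrable_of_hasCompactSupport (.mul_left ?_)
    exact hφ_supp.mono fun x hx hφx => hx (by simp [hφx])
  have hcoupling : Continuous fun x => c * ‖u x‖ ^ 2 := by fun_prop
  have heffective : Continuous fun x => U x + c * ‖u x‖ ^ 2 := by fun_prop
  have hexpand (μ : ℝ) : ∫ x, ⟪(U x + c * ‖u x‖ ^ 2 - μ) • u x, φ x⟫_ℝ =
      (∫ x, U x * ⟪u x, φ x⟫_ℝ) + c * (∫ x, ‖u x‖ ^ 2 * ⟪u x, φ x⟫_ℝ)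
        - μ * ∫ x, ⟪u x, φ x⟫_ℝ := by
    simp only [real_inner_smul_left, sub_mul]
    rw [integral_sub (hint heffective) (hint continuous_const)]
    simp only [add_mul]
    rw [integral_add (hint hU) (hint hcoupling)]
    simp only [mul_assoc, integral_const_mul]
  rw [hexpand]
  linarith [h.firstVariation_eq hU hφ hγ hφ_supp]

end EulerLagrange

section Regularity

variable {E : Type*} [NormedAddCommGroup E] {U : ℝ → ℝ} {c : ℝ} {u g k : ℝ → E}

theorem MemEnergySpace.congr_ae [NormedSpace ℝ E] (hu : MemEnergySpace U u g)
    (hgk : g =ᵐ[volume] k) : MemEnergySpace U u k where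
  hasWeakDeriv := hu.hasWeakDeriv.congr_ae hgk
  memLp := hu.memLp
  memLp_deriv := hu.memLp_deriv.ae_eq hgk
  integrable_potential := hu.integrable_potential

theorem gpEnergy_congr_ae (hgk : g =ᵐ[volume] k) : gpEnergy U c u g = gpEnergy U c u k := by
  have hkinetic : ∫ x, ‖g x‖ ^ 2 = ∫ x, ‖k x‖ ^ 2 :=
    integral_congr_ae (hgk.mono fun x hx => by simp only [hx])
  rw [gpEnergy, hkinetic, gpEnergy]

theorem IsGroundState.congr_ae [NormedSpace ℝ E] (h : IsGroundState U c u g)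
    (hgk : g =ᵐ[volume] k) : IsGroundState U c u k where
  memEnergySpace := h.memEnergySpace.congr_ae hgk
  integral_norm_sq := h.integral_norm_sq
  gpEnergy_le := gpEnergy_congr_ae hgk ▸ h.gpEnergy_le

theorem IsGroundState.contDiff_and_deriv [InnerProductSpace ℝ E] [CompleteSpace E]
    (hU : Continuous U) (h : IsGroundState U c u g) :
    ContDiff ℝ 2 u ∧ IsGroundState U c u (deriv u) := by
  obtain ⟨μ, hμ⟩ := h.exists_eulerLagrange hU
  have hu_cont := h.memEnergySpace.hasWeakDeriv.continuous
  have hrhs : Continuous fun x => (U x + c * ‖u x‖ ^ 2 - μ) • u x := by fun_prop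
  obtain ⟨d, hd⟩ := exists_ae_eq_add_integral_of_weak_eq h.memEnergySpace.memLp_deriv
    hrhs.locallyIntegrable hμ
  have hground := h.congr_ae hd
  have hu := hground.memEnergySpace.hasWeakDeriv
  have hg : ContDiff ℝ ((0 : ℕ) + 1) _ :=
    (HasWeakDeriv.primitive hrhs.locallyIntegrable d 0).contDiff_succ (contDiff_zero.2 hrhs)
  refine ⟨hu.contDiff_succ (n := 1) (by simpa using hg), ?_⟩
  rwa [deriv_eq (hu.hasDerivAt hg.continuous)]

end Regularity

section AddConst

variable {E : Type*} [NormedAddCommGroup E] {U : ℝ → ℝ} {c : ℝ} {u g : ℝ → E}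

theorem gpEnergy_add_const [NormedSpace ℝ E] (hu : MemEnergySpace U u g) (b : ℝ) :
    gpEnergy (fun x => U x + b) c u g = gpEnergy U c u g + b * ∫ x, ‖u x‖ ^ 2 := by
  simp only [gpEnergy, add_mul]
  rw [integral_add hu.integrable_potential (hu.integrable_norm_sq.const_mul b), integral_const_mul]
  ring

theorem IsGroundState.of_add_const [NormedSpace ℝ E] {b : ℝ}
    (h : IsGroundState (fun x => U x + b) c u g) : IsGroundState U c u g := by
  have hu : MemEnergySpace U u g := by simpa using h.memEnergySpace.potential_add_const (b := -b)
  refine ⟨hu, h.integral_norm_sq, fun v k hv hvN => ?_⟩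
  have hle := h.gpEnergy_le v k hv.potential_add_const hvN
  rw [gpEnergy_add_const hu, gpEnergy_add_const hv, h.integral_norm_sq, hvN] at hle
  linarith

end AddConst

theorem exists_ground_state_general {E : Type*} [NormedAddCommGroup E] [InnerProductSpace ℝ E]
    [FiniteDimensional ℝ E] [Nontrivial E] {U : ℝ → ℝ} (hU : Continuous U)
    (hU_top : Tendsto U (cocompact ℝ) atTop) (c : ℝ) :
    ∃ u : ℝ → E, ContDiff ℝ 2 u ∧ IsGroundState U c u (deriv u) := by
  have : CompleteSpace E := FiniteDimensional.complete ℝ E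
  obtain ⟨x₀, hx₀⟩ := hU.exists_forall_le hU_top
  obtain ⟨u, g, h⟩ := exists_isGroundState_of_nonneg (E := E) (U := fun x => U x + -U x₀)
    (by fun_prop) (fun x => by linarith [hx₀ x]) (tendsto_atTop_add_const_right _ _ hU_top) c
  exact ⟨u, h.of_add_const.contDiff_and_deriv hU⟩

/-- The harmonic trap `ξ²` minus the optical lattice `V₀ cos²(αξ)`: the potential part of
`energy`. -/
noncomputable def trapPotential (V₀ α ξ : ℝ) : ℝ := ξ ^ 2 - V₀ * cos (α * ξ) ^ 2

theorem continuous_trapPotential (V₀ α : ℝ) : Continuous (trapPotential V₀ α) := by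
  unfold trapPotential
  fun_prop

theorem tendsto_trapPotential (V₀ α : ℝ) :
    Tendsto (trapPotential V₀ α) (cocompact ℝ) atTop := by
  have hsq : Tendsto (fun ξ : ℝ => ‖ξ‖ ^ 2 + -|V₀|) (cocompact ℝ) atTop :=
    tendsto_atTop_add_const_right _ _ <|
      (tendsto_pow_atTop two_ne_zero).comp tendsto_norm_cocompact_atTop
  refine tendsto_atTop_mono (fun ξ => ?_) hsq
  have hlattice : V₀ * cos (α * ξ) ^ 2 ≤ |V₀| :=
    (mul_le_mul_of_nonneg_right (le_abs_self V₀) (sq_nonneg _)).trans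
      (mul_le_of_le_one_right (abs_nonneg V₀) (cos_sq_le_one _))
  rw [trapPotential, norm_eq_abs, sq_abs]
  linarith

section EnergySpace

variable {V₀ α : ℝ} {ψ : ℝ → ℂ}

theorem integrable_cos_sq_mul {f : ℝ → ℝ} (hf : Integrable f) (α : ℝ) :
    Integrable fun ξ => cos (α * ξ) ^ 2 * f ξ :=
  hf.bdd_mul (c := 1) (by fun_prop) (.of_forall fun ξ => by simpa using cos_sq_le_one _)

theorem InX.memEnergySpace (h : InX ψ) (V₀ α : ℝ) :
    MemEnergySpace (trapPotential V₀ α) ψ (deriv ψ) := by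
  obtain ⟨hψ, hmass, hkinetic, htrap, -⟩ := h
  have hψ'2 : MemLp (deriv ψ) 2 := (memLp_two_iff_integrable_sq_norm
    (stronglyMeasurable_deriv ψ).aestronglyMeasurable).2 hkinetic
  refine ⟨.of_hasDerivAt (fun ξ => (hψ ξ).hasDerivAt) (hψ'2.locallyIntegrable one_le_two),
    (memLp_two_iff_integrable_sq_norm hψ.continuous.aestronglyMeasurable).2 hmass, hψ'2, ?_⟩
  refine (htrap.sub ((integrable_cos_sq_mul hmass α).const_mul V₀)).congr
    (.of_forall fun ξ => ?_)
  simp only [trapPotential, Pi.sub_apply]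
  ring

theorem MemEnergySpace.inX (h : MemEnergySpace (trapPotential V₀ α) ψ (deriv ψ))
    (hψ : Differentiable ℝ ψ) : InX ψ := by
  refine ⟨hψ, h.integrable_norm_sq, h.integrable_norm_deriv_sq, ?_,
    h.hasWeakDeriv.integrable_norm_pow_four h.memLp h.memLp_deriv⟩
  refine (h.integrable_potential.add
    ((integrable_cos_sq_mul h.integrable_norm_sq α).const_mul V₀)).congr (.of_forall fun ξ => ?_)
  simp only [trapPotential, Pi.add_apply]
  ring

theorem InX.energy_eq_gpEnergy (h : InX ψ) (lam V₀ α : ℝ) :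
    energy lam V₀ α ψ = gpEnergy (trapPotential V₀ α) lam ψ (deriv ψ) := by
  obtain ⟨-, hmass, -, htrap, -⟩ := h
  have hpotential : ∫ ξ, trapPotential V₀ α ξ * ‖ψ ξ‖ ^ 2 =
      (∫ ξ, ξ ^ 2 * ‖ψ ξ‖ ^ 2) - V₀ * ∫ ξ, cos (α * ξ) ^ 2 * ‖ψ ξ‖ ^ 2 := by
    simp only [trapPotential, sub_mul, mul_assoc]
    rw [integral_sub htrap ((integrable_cos_sq_mul hmass α).const_mul V₀), integral_const_mul]
  rw [energy, gpEnergy, hpotential]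
  ring

theorem IsGroundState.inSigma1_and_energy_le {lam : ℝ} (hψ : Differentiable ℝ ψ)
    (h : IsGroundState (trapPotential V₀ α) lam ψ (deriv ψ)) :
    InSigma1 ψ ∧ ∀ χ : ℝ → ℂ, InSigma1 χ → energy lam V₀ α ψ ≤ energy lam V₀ α χ := by
  have hψX := h.memEnergySpace.inX hψ
  refine ⟨⟨hψX, h.integral_norm_sq⟩, fun χ hχ => ?_⟩
  rw [hψX.energy_eq_gpEnergy, hχ.1.energy_eq_gpEnergy]
  exact h.gpEnergy_le _ _ (hχ.1.memEnergySpace V₀ α) hχ.2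

end EnergySpace

theorem exists_ground_state (lam V₀ α : ℝ) :
    ∃ ψmin : ℝ → ℂ, InSigma1 ψmin ∧
      ∀ ψ : ℝ → ℂ, InSigma1 ψ → energy lam V₀ α ψmin ≤ energy lam V₀ α ψ := by
  obtain ⟨ψ, hψ, hground⟩ := exists_ground_state_general (E := ℂ)
    (continuous_trapPotential V₀ α) (tendsto_trapPotential V₀ α) lam
  exact ⟨ψ, hground.inSigma1_and_energy_le (hψ.differentiable two_ne_zero)⟩
end
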